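/- Let ε > 0 and let α₁, …, α_K be sub-Gaussian probability measures on ℝ^d, and let w₁, …, w_K be nonnegative reals summing to 1. A sub-Gaussian probability measure α⋆ on ℝ^d minimizes α ↦ Σ_{k=1}^K w_k OT_ε(α_k, α) over all sub-Gaussian probability measures if and only if there exist continuous functions f₁, …, f_K, g₁, …, g_K : ℝ^d → ℝ, each integrable with respect to every sub-Gaussian probability measure, such that for every k: exp(f_k(x)/ε) · ∫ exp((g_k(y) − ‖x − y‖²)/ε) dα⋆(y) = 1 for all x ∈ ℝ^d, exp(g_k(y)/ε) · ∫ exp((f_k(x) − ‖x − y‖²)/ε) dα_k(x) = 1 for all y ∈ ℝ^d, and ∫ (Σ_{k=1}^K w_k g_k) d(β − α⋆) ≥ 0 for every sub-Gaussian probability measure β on ℝ^d. -/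

import Mathlib

/-!
The entropic cost is computed through its dual. Expanding `‖x - y‖²` and writing
`f = ε u + ‖·‖²`, `g = ε v + ‖·‖²`, `s = 2 / ε`, the two fixed-point equations for `(f, g)` become the
Schrödinger system `u = -LZ s ν v`, `v = -LZ s μ u` for the log-Laplace transform
`LZ s μ u y = log ∫ exp (u x + s ⟪x, y⟫) dμ(x)`. Whenever potentials satisfy it, the entropic cost
equals `∫ f dμ + ∫ g dν` (`OTe_eq`), and the same pair `(f, g)`, used with a different second
marginal, still gives a lower bound (`le_OTe`, Gibbs' variational inequality).

Sufficiency is then immediate: `OT_ε(α_k, α) ≥ ∫ f_k dα_k + ∫ g_k dα` with equality at `α⋆`, and the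
variational inequality compares the weighted sums.

For necessity, potentials exist (`exists_sol`): the convex functional `u ↦ ∫ LZ s μ u dν` is minimized
over the functions with `∫ u dμ = 0` lying between a negative quadratic and a linear bound. This is a
bounded closed convex subset of `L²(μ)`, so decreasing sequences of sublevel sets have a common point.
Two Sinkhorn half-steps followed by the equality case of Jensen's inequality show that the minimizer
solves the system, provided the growth bounds are chosen in terms of the sub-Gaussian parameters.
Solutions of the system are the unique minimizers (`Sol.minimal`), and compactness upgrades uniqueness
to stability (`Sol.stability`).

Finally (`first_order`), if `α⋆` is a minimizer and `α_t = (1 - t) α⋆ + t β`, comparing the costs of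
`α⋆` and `α_t` through the potentials `U_k` of `(α_k, α_t)` shows at once that the variational
inequality holds with `U_k` in place of `u_k`, and that `U_k` is within `O(t)` of minimizing the dual
functional of `(α_k, α⋆)` when `w_k > 0`. By stability the values on `β` differ in the limit only in
the favourable direction, which gives the variational inequality for the potentials of `α⋆` itself.
-/

open MeasureTheory ProbabilityTheory
open scoped ENNReal Classical

/-- Kullback–Leibler divergence `KL(π ‖ ρ)`, valued in `EReal`:
`∫ log (dπ/dρ) dπ` when `π ≪ ρ` and the log-likelihood ratio is `π`-integrable,
and `⊤` otherwise. -/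
noncomputable def KLdiv {X : Type*} [MeasurableSpace X] (π ρ : Measure X) : EReal :=
  if π ≪ ρ ∧ Integrable (fun x => Real.log (π.rnDeriv ρ x).toReal) π
  then ((∫ x, Real.log (π.rnDeriv ρ x).toReal ∂π : ℝ) : EReal)
  else ⊤

/-- Entropic optimal transport cost on `ℝ^d` with quadratic cost and product reference
measure: `OT_ε(α, β) = inf { ∫ ‖x-y‖² dπ + ε KL(π ‖ α ⊗ β) }` over couplings `π`
of `α` and `β`. -/
noncomputable def OTe (d : ℕ) (ε : ℝ)
    (α β : Measure (EuclideanSpace ℝ (Fin d))) : EReal :=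
  ⨅ (π : Measure (EuclideanSpace ℝ (Fin d) × EuclideanSpace ℝ (Fin d)))
    (_ : IsProbabilityMeasure π) (_ : π.fst = α) (_ : π.snd = β),
    (((∫⁻ p, ENNReal.ofReal (‖p.1 - p.2‖ ^ 2) ∂π : ℝ≥0∞) : EReal)
      + (ε : EReal) * KLdiv π (α.prod β))

/-- A probability measure on `ℝ^d` is sub-Gaussian if `∫ exp (‖x‖²/q) dα < ∞`
for some `q > 0`. -/
def SubGaussian (d : ℕ) (α : Measure (EuclideanSpace ℝ (Fin d))) : Prop :=
  ∃ q : ℝ, 0 < q ∧ ∫⁻ x, ENNReal.ofReal (Real.exp (‖x‖ ^ 2 / q)) ∂α < ⊤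

/-! ### Sub-Gaussian measures and log-Laplace transforms -/

section LogLaplace

set_option linter.unusedSectionVars false

open Filter Topology Real

variable {E : Type*} [NormedAddCommGroup E] [InnerProductSpace ℝ E] [MeasurableSpace E]
  [BorelSpace E] [SecondCountableTopology E]

/-- Quantitative sub-Gaussianity: the exponential moment of order `1 / q` is at most `B`. -/
structure SG (q B : ℝ) (μ : Measure E) : Prop where
  int : Integrable (fun x => exp (‖x‖ ^ 2 / q)) μ
  bound : ∫ x, exp (‖x‖ ^ 2 / q) ∂μ ≤ B

/-- The log-Laplace transform `y ↦ log ∫ exp (u x + s ⟪x, y⟫) dμ(x)`. -/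
noncomputable def LZ (s : ℝ) (μ : Measure E) (u : E → ℝ) (y : E) : ℝ :=
  log (∫ x, exp (u x + s * inner ℝ x y) ∂μ)

/-- The growth class of potentials: at most linear from above and at most quadratic from below,
almost everywhere. -/
structure Gr (C : ℝ) (μ : Measure E) (u : E → ℝ) : Prop where
  meas : AEStronglyMeasurable u μ
  up : ∀ᵐ x ∂μ, u x ≤ C * (1 + ‖x‖)
  lo : ∀ᵐ x ∂μ, -(C * (1 + ‖x‖ ^ 2)) ≤ u x

variable {q B s C : ℝ} {μ ν : Measure E} [IsProbabilityMeasure μ] [IsProbabilityMeasure ν]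
  {u v : E → ℝ}

lemma SG.one_le (hq : 0 < q) (h : SG q B μ) : 1 ≤ B := by
  refine le_trans ?_ h.bound
  calc (1 : ℝ) = ∫ _x, (1 : ℝ) ∂μ := by simp
    _ ≤ _ := integral_mono (integrable_const _) h.int fun x => one_le_exp (by positivity)

/-- Completing the square: exponentials of linear functions are dominated by the sub-Gaussian
weight. -/
lemma exp_lin_le (hq : 0 < q) (a b r : ℝ) :
    exp (a + b * r) ≤ exp (a + q * b ^ 2 / 4) * exp (r ^ 2 / q) := by
  rw [← exp_add, exp_le_exp]
  have : 0 ≤ (r / q - b / 2) ^ 2 * q := by positivity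
  have e : (r / q - b / 2) ^ 2 * q = r ^ 2 / q - b * r + q * b ^ 2 / 4 := by
    field_simp
    ring
  linarith

lemma SG.integrable_exp_lin (hq : 0 < q) (h : SG q B μ) (a b : ℝ) :
    Integrable (fun x => exp (a + b * ‖x‖)) μ := by
  refine (h.int.const_mul (exp (a + q * b ^ 2 / 4))).mono' (by fun_prop) (ae_of_all _ fun x => ?_)
  rw [norm_of_nonneg (exp_pos _).le]
  exact exp_lin_le hq a b _

lemma SG.integral_exp_lin_le (hq : 0 < q) (h : SG q B μ) (a b : ℝ) :
    ∫ x, exp (a + b * ‖x‖) ∂μ ≤ exp (a + q * b ^ 2 / 4) * B := by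
  calc _ ≤ ∫ x, exp (a + q * b ^ 2 / 4) * exp (‖x‖ ^ 2 / q) ∂μ :=
        integral_mono (h.integrable_exp_lin hq a b) (h.int.const_mul _)
          fun x => exp_lin_le hq a b _
    _ = exp (a + q * b ^ 2 / 4) * ∫ x, exp (‖x‖ ^ 2 / q) ∂μ := integral_const_mul _ _
    _ ≤ _ := by gcongr; exact h.bound

lemma sq_le_exp (hq : 0 < q) (r : ℝ) : r ^ 2 ≤ q * exp (r ^ 2 / q) := by
  have := add_one_le_exp (r ^ 2 / q)
  have e : r ^ 2 = q * (r ^ 2 / q) := by field_simp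
  nlinarith

lemma SG.integrable_sq (hq : 0 < q) (h : SG q B μ) : Integrable (fun x => ‖x‖ ^ 2) μ := by
  refine (h.int.const_mul q).mono' (by fun_prop) (ae_of_all _ fun x => ?_)
  rw [norm_of_nonneg (by positivity)]
  exact sq_le_exp hq _

lemma SG.integral_sq_le (hq : 0 < q) (h : SG q B μ) : ∫ x, ‖x‖ ^ 2 ∂μ ≤ q * B := by
  calc _ ≤ ∫ x, q * exp (‖x‖ ^ 2 / q) ∂μ :=
        integral_mono (h.integrable_sq hq) (h.int.const_mul _) fun x => sq_le_exp hq _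
    _ = q * ∫ x, exp (‖x‖ ^ 2 / q) ∂μ := integral_const_mul _ _
    _ ≤ _ := by gcongr; exact h.bound

lemma SG.integrable_norm (hq : 0 < q) (h : SG q B μ) : Integrable (fun x => ‖x‖) μ := by
  refine ((h.integrable_sq hq).add (integrable_const 1)).mono' (by fun_prop)
    (ae_of_all _ fun x => ?_)
  simp only [norm_norm, Pi.add_apply]
  nlinarith [sq_nonneg (‖x‖ - 1)]

lemma SG.integral_norm_le (hq : 0 < q) (h : SG q B μ) : ∫ x, ‖x‖ ∂μ ≤ q * B + 1 := by
  calc _ ≤ ∫ x, (‖x‖ ^ 2 + 1) ∂μ := by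
        refine integral_mono (h.integrable_norm hq)
          ((h.integrable_sq hq).add (integrable_const 1)) fun x => ?_
        simp only
        nlinarith [sq_nonneg (‖x‖ - 1)]
    _ = ∫ x, ‖x‖ ^ 2 ∂μ + 1 := by
        rw [integral_add (h.integrable_sq hq) (integrable_const 1)]; simp
    _ ≤ _ := by linarith [h.integral_sq_le hq]

lemma SG.integrable_inner (hq : 0 < q) (h : SG q B μ) (y : E) :
    Integrable (fun x => (inner ℝ x y : ℝ)) μ := by
  refine ((h.integrable_norm hq).mul_const ‖y‖).mono' (by fun_prop) (ae_of_all _ fun x => ?_)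
  exact norm_inner_le_norm x y

lemma SG.abs_integral_inner_le (hq : 0 < q) (h : SG q B μ) (y : E) :
    |∫ x, (inner ℝ x y : ℝ) ∂μ| ≤ (q * B + 1) * ‖y‖ := by
  rw [← Real.norm_eq_abs]
  calc _ ≤ ∫ x, ‖x‖ * ‖y‖ ∂μ :=
        norm_integral_le_of_norm_le ((h.integrable_norm hq).mul_const ‖y‖)
          (ae_of_all _ fun x => norm_inner_le_norm x y)
    _ = (∫ x, ‖x‖ ∂μ) * ‖y‖ := integral_mul_const _ _
    _ ≤ _ := by gcongr; exact h.integral_norm_le hq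

lemma Gr.nonneg (h : Gr C μ u) : 0 ≤ C := by
  obtain ⟨x, h1, h2⟩ := (h.up.and h.lo).exists
  have : 0 ≤ C * (2 + ‖x‖ + ‖x‖ ^ 2) := by linarith
  by_contra hC
  push Not at hC
  have : C * (2 + ‖x‖ + ‖x‖ ^ 2) < 0 := mul_neg_of_neg_of_pos hC (by positivity)
  linarith

lemma Gr.abs_le (h : Gr C μ u) : ∀ᵐ x ∂μ, |u x| ≤ 2 * C * (1 + ‖x‖ ^ 2) := by
  filter_upwards [h.up, h.lo] with x h1 h2
  have hC := h.nonneg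
  have h3 : C * ‖x‖ ≤ C * (1 + ‖x‖ ^ 2) :=
    mul_le_mul_of_nonneg_left (by nlinarith [sq_nonneg (‖x‖ - 1)]) hC
  have h4 : 0 ≤ C * ‖x‖ ^ 2 := by positivity
  rw [_root_.abs_le]
  constructor <;> nlinarith

lemma Gr.integrable (hq : 0 < q) (h : SG q B μ) (hu : Gr C μ u) : Integrable u μ := by
  refine (((integrable_const (1 : ℝ)).add (h.integrable_sq hq)).const_mul (2 * C)).mono' hu.meas ?_
  exact hu.abs_le

lemma exp_pot_le (hs : 0 ≤ s) {a : ℝ} {x : E} (ha : a ≤ C * (1 + ‖x‖)) {y : E} {R : ℝ}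
    (hy : ‖y‖ ≤ R) :
    exp (a + s * inner ℝ x y) ≤ exp (C + (C + s * R) * ‖x‖) := by
  rw [exp_le_exp]
  have h1 : inner ℝ x y ≤ ‖x‖ * R := (real_inner_le_norm x y).trans (by gcongr)
  have h2 := mul_le_mul_of_nonneg_left h1 hs
  nlinarith

lemma Gr.aesm_exp (hu : AEStronglyMeasurable u μ) (y : E) :
    AEStronglyMeasurable (fun x => exp (u x + s * inner ℝ x y)) μ := by
  have : AEStronglyMeasurable (fun x => u x + s * inner ℝ x y) μ :=
    hu.add (by fun_prop)
  exact continuous_exp.comp_aestronglyMeasurable this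

lemma Gr.integrable_exp (hq : 0 < q) (hs : 0 ≤ s) (h : SG q B μ) (hu : Gr C μ u) (y : E) :
    Integrable (fun x => exp (u x + s * inner ℝ x y)) μ := by
  refine (h.integrable_exp_lin hq C (C + s * ‖y‖)).mono' (Gr.aesm_exp hu.meas y) ?_
  filter_upwards [hu.up] with x hx
  rw [norm_of_nonneg (exp_pos _).le]
  exact exp_pot_le hs hx le_rfl

lemma Gr.pos (hq : 0 < q) (hs : 0 ≤ s) (h : SG q B μ) (hu : Gr C μ u) (y : E) :
    0 < ∫ x, exp (u x + s * inner ℝ x y) ∂μ :=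
  integral_exp_pos (hu.integrable_exp hq hs h y)

lemma Gr.exp_LZ (hq : 0 < q) (hs : 0 ≤ s) (h : SG q B μ) (hu : Gr C μ u) (y : E) :
    exp (LZ s μ u y) = ∫ x, exp (u x + s * inner ℝ x y) ∂μ :=
  exp_log (hu.pos hq hs h y)

lemma Gr.LZ_le (hq : 0 < q) (hs : 0 ≤ s) (h : SG q B μ) (hu : Gr C μ u) {D : ℝ}
    (hD : ∀ᵐ x ∂μ, u x ≤ D * (1 + ‖x‖)) (y : E) :
    LZ s μ u y ≤ log B + D + q * (D + s * ‖y‖) ^ 2 / 4 := by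
  have hB : 0 < B := by linarith [h.one_le hq]
  rw [← exp_le_exp, hu.exp_LZ hq hs h, add_assoc, exp_add, exp_log hB, mul_comm]
  refine le_trans (integral_mono_ae (hu.integrable_exp hq hs h y)
    (h.integrable_exp_lin hq D (D + s * ‖y‖)) ?_) (h.integral_exp_lin_le hq D (D + s * ‖y‖))
  filter_upwards [hD] with x hx
  exact exp_pot_le hs hx le_rfl

/-- Jensen's inequality for the log-Laplace transform. -/
lemma Gr.le_LZ (hq : 0 < q) (hs : 0 ≤ s) (h : SG q B μ) (hu : Gr C μ u) (y : E) :
    ∫ x, u x ∂μ - s * (q * B + 1) * ‖y‖ ≤ LZ s μ u y := by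
  have hi := (hu.integrable hq h)
  have hj : Integrable (fun x => s * inner ℝ x y) μ := (h.integrable_inner hq y).const_mul s
  have key : ∫ x, (u x + s * inner ℝ x y) ∂μ ≤ LZ s μ u y := by
    have := ConvexOn.map_integral_le (μ := μ) (s := Set.univ) (g := exp)
      (f := fun x => u x + s * inner ℝ x y) convexOn_exp continuous_exp.continuousOn isClosed_univ
      (by simp) (hi.add hj) (hu.integrable_exp hq hs h y)
    rw [← exp_le_exp, hu.exp_LZ hq hs h]
    exact this
  rw [integral_add hi hj, integral_const_mul] at key
  have h2 := mul_le_mul_of_nonneg_left (neg_le_of_abs_le (h.abs_integral_inner_le hq y)) hs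
  nlinarith

/-- The common quadratic bound on log-Laplace transforms of normalized potentials. -/
noncomputable def bd (s q B C : ℝ) : ℝ :=
  s * (q * B + 1) + log B + C + q * (C ^ 2 + s ^ 2) / 2

lemma Gr.abs_LZ_le (hq : 0 < q) (hs : 0 ≤ s) (h : SG q B μ) (hu : Gr C μ u)
    (h0 : ∫ x, u x ∂μ = 0) (y : E) :
    |LZ s μ u y| ≤ bd s q B C * (1 + ‖y‖ ^ 2) := by
  have h1 := hu.LZ_le hq hs h hu.up y
  have h2 := hu.le_LZ hq hs h y
  rw [h0] at h2
  have hC := hu.nonneg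
  have hB := h.one_le hq
  have hlB := log_nonneg hB
  have h3 : s * (q * B + 1) * ‖y‖ ≤ s * (q * B + 1) * (1 + ‖y‖ ^ 2) :=
    mul_le_mul_of_nonneg_left (by nlinarith [sq_nonneg (‖y‖ - 1)]) (by positivity)
  have h4 : q * (C + s * ‖y‖) ^ 2 / 4 ≤ q * (C ^ 2 + s ^ 2) / 2 * (1 + ‖y‖ ^ 2) := by
    have : (C + s * ‖y‖) ^ 2 ≤ 2 * ((C ^ 2 + s ^ 2) * (1 + ‖y‖ ^ 2)) := by
      nlinarith [sq_nonneg (C - s * ‖y‖), sq_nonneg s, sq_nonneg (C * ‖y‖)]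
    have := mul_le_mul_of_nonneg_left this hq.le
    nlinarith
  have h5 : 0 ≤ (log B + C) * ‖y‖ ^ 2 := by positivity
  have h6 : 0 ≤ q * (C ^ 2 + s ^ 2) / 2 * (1 + ‖y‖ ^ 2) := by positivity
  have h7 : 0 ≤ s * (q * B + 1) * (1 + ‖y‖ ^ 2) := by positivity
  have e : bd s q B C * (1 + ‖y‖ ^ 2) = s * (q * B + 1) * (1 + ‖y‖ ^ 2)
      + (log B + C) + (log B + C) * ‖y‖ ^ 2 + q * (C ^ 2 + s ^ 2) / 2 * (1 + ‖y‖ ^ 2) := by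
    unfold bd; ring
  rw [_root_.abs_le, e]
  constructor <;> linarith

lemma Gr.continuous_LZ (hq : 0 < q) (hs : 0 ≤ s) (h : SG q B μ) (hu : Gr C μ u) :
    Continuous (LZ s μ u) := by
  rw [continuous_iff_continuousAt]
  intro y
  refine ContinuousAt.log ?_ (hu.pos hq hs h y).ne'
  refine continuousAt_of_dominated (bound := fun x => exp (C + (C + s * (‖y‖ + 1)) * ‖x‖))
    (Eventually.of_forall fun z => Gr.aesm_exp hu.meas z) ?_
    (h.integrable_exp_lin hq _ _) (ae_of_all _ fun x => by fun_prop)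
  filter_upwards [Metric.ball_mem_nhds y one_pos] with z hz
  filter_upwards [hu.up] with x hx
  rw [norm_of_nonneg (exp_pos _).le]
  refine exp_pot_le hs hx ?_
  have : ‖z - y‖ < 1 := by simpa [dist_eq_norm] using hz
  linarith [norm_le_norm_add_norm_sub' z y]

lemma Gr.tendsto_LZ (hq : 0 < q) (hs : 0 ≤ s) (h : SG q B μ) {U : ℕ → E → ℝ}
    (hU : ∀ n, Gr C μ (U n)) (hu : Gr C μ u)
    (hlim : ∀ᵐ x ∂μ, Tendsto (fun n => U n x) atTop (𝓝 (u x))) (y : E) :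
    Tendsto (fun n => LZ s μ (U n) y) atTop (𝓝 (LZ s μ u y)) := by
  refine Tendsto.log ?_ (hu.pos hq hs h y).ne'
  refine tendsto_integral_of_dominated_convergence
    (fun x => exp (C + (C + s * ‖y‖) * ‖x‖)) (fun n => Gr.aesm_exp (hU n).meas y)
    (h.integrable_exp_lin hq _ _) (fun n => ?_) ?_
  · filter_upwards [(hU n).up] with x hx
    rw [norm_of_nonneg (exp_pos _).le]
    exact exp_pot_le hs hx le_rfl
  · filter_upwards [hlim] with x hx
    exact (continuous_exp.tendsto _).comp (hx.add_const _)

/-- Convexity of the log-Laplace transform in the potential (Hölder's inequality). -/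
lemma Gr.LZ_convex (hq : 0 < q) (hs : 0 ≤ s) (h : SG q B μ) (hu : Gr C μ u) (hv : Gr C μ v)
    {a b : ℝ} (ha : 0 ≤ a) (hb : 0 ≤ b) (hab : a + b = 1) (hw : Gr C μ (fun x => a * u x + b * v x))
    (y : E) :
    LZ s μ (fun x => a * u x + b * v x) y ≤ a * LZ s μ u y + b * LZ s μ v y := by
  rw [← exp_le_exp, hw.exp_LZ hq hs h]
  set p := LZ s μ u y with hp
  set r := LZ s μ v y with hr
  have key : ∀ x, exp (a * u x + b * v x + s * inner ℝ x y) ≤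
      exp (a * p + b * r) * (a * (exp (u x + s * inner ℝ x y) * exp (-p))
        + b * (exp (v x + s * inner ℝ x y) * exp (-r))) := by
    intro x
    have := convexOn_exp.2 (Set.mem_univ (u x + s * inner ℝ x y + -p))
      (Set.mem_univ (v x + s * inner ℝ x y + -r)) ha hb hab
    simp only [smul_eq_mul] at this
    rw [exp_add _ (-p), exp_add _ (-r)] at this
    have h2 := mul_le_mul_of_nonneg_left this (exp_pos (a * p + b * r)).le
    rw [← exp_add] at h2
    refine le_trans (le_of_eq ?_) h2
    congr 1
    have : b = 1 - a := by linarith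
    subst this
    ring
  have i1 := hu.integrable_exp hq hs h y
  have i2 := hv.integrable_exp hq hs h y
  refine (integral_mono (hw.integrable_exp hq hs h y) ?_ key).trans (le_of_eq ?_)
  · exact (((i1.mul_const _).const_mul _).add ((i2.mul_const _).const_mul _)).const_mul _
  · rw [integral_const_mul, integral_add ((i1.mul_const _).const_mul _)
      ((i2.mul_const _).const_mul _), integral_const_mul, integral_const_mul, integral_mul_const,
      integral_mul_const, ← hu.exp_LZ hq hs h, ← hv.exp_LZ hq hs h, ← exp_add, ← exp_add]
    simp [← hp, ← hr, hab]

lemma LZ_congr (huv : u =ᵐ[μ] v) : LZ s μ u = LZ s μ v := by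
  funext y
  unfold LZ
  congr 1
  refine integral_congr_ae ?_
  filter_upwards [huv] with x hx
  rw [hx]

lemma LZ_add_const (hq : 0 < q) (hs : 0 ≤ s) (h : SG q B μ) (hu : Gr C μ u) (a : ℝ) (y : E) :
    LZ s μ (fun x => u x + a) y = LZ s μ u y + a := by
  have : (fun x => exp (u x + a + s * inner ℝ x y))
      = fun x => exp (u x + s * inner ℝ x y) * exp a := by
    funext x; rw [← exp_add]; congr 1; ring
  unfold LZ
  rw [this, integral_mul_const, log_mul (hu.pos hq hs h y).ne' (exp_pos _).ne', log_exp]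

/-! ### Normalized potentials and their compactness -/

/-- A decreasing sequence of nonempty bounded closed convex sets in a Hilbert space has a common
point: the elements of minimal norm form a Cauchy sequence. -/
lemma nested_convex {H : Type*} [NormedAddCommGroup H] [InnerProductSpace ℝ H] [CompleteSpace H]
    (K : ℕ → Set H) (hanti : Antitone K) (hne : ∀ n, (K n).Nonempty) (hcl : ∀ n, IsClosed (K n))
    (hconv : ∀ n, Convex ℝ (K n)) (R : ℝ) (hR : ∀ x ∈ K 0, ‖x‖ ≤ R) : ∃ x, ∀ n, x ∈ K n := by
  have hmin : ∀ n, ∃ x ∈ K n, ∀ w ∈ K n, ‖x‖ ≤ ‖w‖ := by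
    intro n
    obtain ⟨x, hx, hx'⟩ := exists_norm_eq_iInf_of_complete_convex (hne n) (hcl n).isComplete
      (hconv n) 0
    refine ⟨x, hx, fun w hw => ?_⟩
    simp only [zero_sub, norm_neg] at hx'
    rw [hx']
    exact ciInf_le (f := fun w : K n => ‖(w : H)‖) ⟨0, by rintro _ ⟨w, rfl⟩; exact norm_nonneg _⟩
      ⟨w, hw⟩
  choose x hx hxmin using hmin
  have hdist : ∀ n m, n ≤ m → ‖x n - x m‖ ^ 2 ≤ 2 * (‖x m‖ ^ 2 - ‖x n‖ ^ 2) := by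
    intro n m hnm
    have hmid := hxmin n _ (hconv n (hx n) (hanti hnm (hx m)) (by norm_num : (0 : ℝ) ≤ 1 / 2)
      (by norm_num : (0 : ℝ) ≤ 1 / 2) (by norm_num))
    rw [← smul_add, norm_smul, Real.norm_of_nonneg (by norm_num)] at hmid
    have hp := parallelogram_law_with_norm ℝ (x n) (x m)
    have h0 := norm_nonneg (x n)
    nlinarith
  have hmono : Monotone fun n => ‖x n‖ ^ 2 := by
    intro n m hnm
    have := hdist n m hnm
    simp only
    nlinarith [sq_nonneg ‖x n - x m‖]
  have hbdd : BddAbove (Set.range fun n => ‖x n‖ ^ 2) := by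
    refine ⟨R ^ 2, ?_⟩
    rintro _ ⟨n, rfl⟩
    have := hR _ (hanti (Nat.zero_le n) (hx n))
    exact pow_le_pow_left₀ (norm_nonneg _) this 2
  have hlim := tendsto_atTop_ciSup hmono hbdd
  have hcau : CauchySeq x := by
    rw [Metric.cauchySeq_iff']
    intro e he
    have := hlim.cauchySeq
    rw [Metric.cauchySeq_iff'] at this
    obtain ⟨N, hN⟩ := this (e ^ 2 / 2) (by positivity)
    refine ⟨N, fun n hn => ?_⟩
    have h1 := hdist N n hn
    have h2 := hN n hn
    rw [Real.dist_eq] at h2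
    have h3 := le_abs_self (‖x n‖ ^ 2 - ‖x N‖ ^ 2)
    rw [dist_comm, dist_eq_norm]
    exact lt_of_pow_lt_pow_left₀ 2 he.le (by linarith)
  obtain ⟨z, hz⟩ := cauchySeq_tendsto_of_complete hcau
  refine ⟨z, fun n => (hcl n).mem_of_tendsto hz ?_⟩
  filter_upwards [eventually_ge_atTop n] with m hm
  exact hanti hm (hx m)

lemma Gr.of_tendsto {U : ℕ → E → ℝ} (hU : ∀ n, Gr C μ (U n))
    (hlim : ∀ᵐ x ∂μ, Tendsto (fun n => U n x) atTop (𝓝 (u x))) : Gr C μ u := by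
  refine ⟨aestronglyMeasurable_of_tendsto_ae atTop (fun n => (hU n).meas) hlim, ?_, ?_⟩
  · filter_upwards [hlim, ae_all_iff.2 fun n => (hU n).up] with x hx h
    exact le_of_tendsto' hx h
  · filter_upwards [hlim, ae_all_iff.2 fun n => (hU n).lo] with x hx h
    exact ge_of_tendsto' hx h

lemma Gr.congr (hu : Gr C μ u) (h : u =ᵐ[μ] v) : Gr C μ v := by
  refine ⟨hu.meas.congr h, ?_, ?_⟩
  · filter_upwards [h, hu.up] with x hx h
    rwa [← hx]
  · filter_upwards [h, hu.lo] with x hx h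
    rwa [← hx]

lemma Gr.convex (hu : Gr C μ u) (hv : Gr C μ v)
    {a b : ℝ} (ha : 0 ≤ a) (hb : 0 ≤ b) (hab : a + b = 1) :
    Gr C μ (fun x => a * u x + b * v x) := by
  have e : b = 1 - a := by linarith
  refine ⟨(hu.meas.const_mul a).add (hv.meas.const_mul b), ?_, ?_⟩
  · filter_upwards [hu.up, hv.up] with x h1 h2
    have := mul_le_mul_of_nonneg_left h1 ha
    have := mul_le_mul_of_nonneg_left h2 hb
    subst e
    linarith
  · filter_upwards [hu.lo, hv.lo] with x h1 h2
    have := mul_le_mul_of_nonneg_left h1 ha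
    have := mul_le_mul_of_nonneg_left h2 hb
    subst e
    linarith

/-- Normalized potentials: members of the growth class with vanishing mean. -/
structure Cls (C : ℝ) (μ : Measure E) (u : E → ℝ) : Prop where
  gr : Gr C μ u
  mean : ∫ x, u x ∂μ = 0

lemma Cls.congr (hu : Cls C μ u) (h : u =ᵐ[μ] v) : Cls C μ v :=
  ⟨hu.gr.congr h, by rw [← integral_congr_ae h]; exact hu.mean⟩

lemma Cls.integrable_LZ (hq : 0 < q) (hs : 0 ≤ s) (h : SG q B μ) (h' : SG q B ν)
    (hu : Cls C μ u) : Integrable (LZ s μ u) ν := by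
  refine (((integrable_const (1 : ℝ)).add (h'.integrable_sq hq)).const_mul (bd s q B C)).mono'
    (hu.gr.continuous_LZ hq hs h).aestronglyMeasurable (ae_of_all _ fun y => ?_)
  exact hu.gr.abs_LZ_le hq hs h hu.mean y

lemma Cls.abs_integral_LZ_le (hq : 0 < q) (hs : 0 ≤ s) (h : SG q B μ) (h' : SG q B ν)
    (hu : Cls C μ u) : |∫ y, LZ s μ u y ∂ν| ≤ bd s q B C * (1 + q * B) := by
  have hb : 0 ≤ bd s q B C := by
    have := (abs_nonneg _).trans (hu.gr.abs_LZ_le hq hs h hu.mean 0)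
    simpa using this
  rw [← Real.norm_eq_abs]
  calc _ ≤ ∫ y, bd s q B C * (1 + ‖y‖ ^ 2) ∂ν :=
        norm_integral_le_of_norm_le
          (((integrable_const (1 : ℝ)).add (h'.integrable_sq hq)).const_mul (bd s q B C))
          (ae_of_all _ fun y => hu.gr.abs_LZ_le hq hs h hu.mean y)
    _ = bd s q B C * (1 + ∫ y, ‖y‖ ^ 2 ∂ν) := by
        rw [integral_const_mul, integral_add (integrable_const _) (h'.integrable_sq hq)]; simp
    _ ≤ _ := by gcongr; exact h'.integral_sq_le hq

lemma Cls.of_tendsto (hq : 0 < q) (h : SG q B μ) {U : ℕ → E → ℝ} (hU : ∀ n, Cls C μ (U n))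
    (hlim : ∀ᵐ x ∂μ, Tendsto (fun n => U n x) atTop (𝓝 (u x))) : Cls C μ u := by
  refine ⟨Gr.of_tendsto (fun n => (hU n).gr) hlim, ?_⟩
  have : Tendsto (fun n => ∫ x, U n x ∂μ) atTop (𝓝 (∫ x, u x ∂μ)) :=
    tendsto_integral_of_dominated_convergence (fun x => 2 * C * (1 + ‖x‖ ^ 2))
      (fun n => (hU n).gr.meas)
      (((integrable_const (1 : ℝ)).add (h.integrable_sq hq)).const_mul (2 * C))
      (fun n => (hU n).gr.abs_le) hlim
  simp only [(hU _).mean] at this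
  exact tendsto_nhds_unique this tendsto_const_nhds |>.symm ▸ rfl

lemma Cls.tendsto_integral_LZ (hq : 0 < q) (hs : 0 ≤ s) (h : SG q B μ) (h' : SG q B ν)
    {U : ℕ → E → ℝ} (hU : ∀ n, Cls C μ (U n))
    (hlim : ∀ᵐ x ∂μ, Tendsto (fun n => U n x) atTop (𝓝 (u x))) :
    Tendsto (fun n => ∫ y, LZ s μ (U n) y ∂ν) atTop (𝓝 (∫ y, LZ s μ u y ∂ν)) :=
  tendsto_integral_of_dominated_convergence (fun y => bd s q B C * (1 + ‖y‖ ^ 2))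
    (fun n => ((hU n).gr.continuous_LZ hq hs h).aestronglyMeasurable)
    (((integrable_const (1 : ℝ)).add (h'.integrable_sq hq)).const_mul (bd s q B C))
    (fun n => ae_of_all _ fun y => (hU n).gr.abs_LZ_le hq hs h (hU n).mean y)
    (ae_of_all _ fun y => Gr.tendsto_LZ hq hs h (fun n => (hU n).gr)
      (Gr.of_tendsto (fun n => (hU n).gr) hlim) hlim y)

lemma Cls.convex (hq : 0 < q) (h : SG q B μ) (hu : Cls C μ u) (hv : Cls C μ v)
    {a b : ℝ} (ha : 0 ≤ a) (hb : 0 ≤ b) (hab : a + b = 1) :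
    Cls C μ (fun x => a * u x + b * v x) := by
  refine ⟨hu.gr.convex hv.gr ha hb hab, ?_⟩
  rw [integral_add ((hu.gr.integrable hq h).const_mul a) ((hv.gr.integrable hq h).const_mul b),
    integral_const_mul, integral_const_mul, hu.mean, hv.mean]
  simp

lemma Cls.integral_LZ_convex (hq : 0 < q) (hs : 0 ≤ s) (h : SG q B μ) (h' : SG q B ν)
    (hu : Cls C μ u) (hv : Cls C μ v)
    {a b : ℝ} (ha : 0 ≤ a) (hb : 0 ≤ b) (hab : a + b = 1) :
    ∫ y, LZ s μ (fun x => a * u x + b * v x) y ∂ν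
      ≤ a * ∫ y, LZ s μ u y ∂ν + b * ∫ y, LZ s μ v y ∂ν := by
  have hw := hu.convex hq h hv ha hb hab
  have i1 := (hu.integrable_LZ hq hs h h').const_mul a
  have i2 := (hv.integrable_LZ hq hs h h').const_mul b
  calc _ ≤ ∫ y, (a * LZ s μ u y + b * LZ s μ v y) ∂ν :=
        integral_mono (hw.integrable_LZ hq hs h h') (i1.add i2)
          fun y => hu.gr.LZ_convex hq hs h hv.gr ha hb hab hw.gr y
    _ = _ := by rw [integral_add i1 i2, integral_const_mul, integral_const_mul]

lemma memLp_bound (hq : 0 < q) (h : SG q B μ) (C : ℝ) :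
    MemLp (fun x => 2 * C * (1 + ‖x‖ ^ 2)) 2 μ := by
  rw [memLp_two_iff_integrable_sq (by fun_prop)]
  refine (h.int.const_mul (8 * C ^ 2 * (1 + 2 * q ^ 2))).mono' (by fun_prop)
    (ae_of_all _ fun x => ?_)
  rw [norm_of_nonneg (by positivity)]
  have h0 : 0 ≤ ‖x‖ ^ 2 / q := by positivity
  have h1 := quadratic_le_exp_of_nonneg h0
  have h2 : 1 ≤ exp (‖x‖ ^ 2 / q) := one_le_exp h0
  have h3 : (‖x‖ ^ 2) ^ 2 = 2 * q ^ 2 * ((‖x‖ ^ 2 / q) ^ 2 / 2) := by field_simp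
  have h4 : (‖x‖ ^ 2) ^ 2 ≤ 2 * q ^ 2 * exp (‖x‖ ^ 2 / q) := by
    rw [h3]; gcongr; linarith
  have h5 : (1 + ‖x‖ ^ 2) ^ 2 ≤ 2 * ((1 + 2 * q ^ 2) * exp (‖x‖ ^ 2 / q)) := by
    nlinarith [sq_nonneg (1 - ‖x‖ ^ 2)]
  calc (2 * C * (1 + ‖x‖ ^ 2)) ^ 2 = 4 * C ^ 2 * (1 + ‖x‖ ^ 2) ^ 2 := by ring
    _ ≤ 4 * C ^ 2 * (2 * ((1 + 2 * q ^ 2) * exp (‖x‖ ^ 2 / q))) := by gcongr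
    _ = _ := by ring

/-- Compactness of the class of normalized potentials, in the form of an intersection property for
decreasing sublevel sets of the convex functionals `u ↦ ∫ LZ s μ u dν`: inside `L²(μ)` these are
bounded closed convex sets. -/
lemma exists_cls_of_forall (hq : 0 < q) (hs : 0 ≤ s) {ν₁ ν₂ : Measure E} [IsProbabilityMeasure ν₁]
    [IsProbabilityMeasure ν₂] (h : SG q B μ) (h₁ : SG q B ν₁) (h₂ : SG q B ν₂) {a : ℕ → ℝ}
    (ha : Antitone a) {b : ℝ}
    (hne : ∀ n, ∃ u, Cls C μ u ∧ ∫ y, LZ s μ u y ∂ν₁ ≤ a n ∧ ∫ y, LZ s μ u y ∂ν₂ ≤ b) :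
    ∃ u, Cls C μ u ∧ (∀ n, ∫ y, LZ s μ u y ∂ν₁ ≤ a n) ∧ ∫ y, LZ s μ u y ∂ν₂ ≤ b := by
  let K : ℕ → Set (Lp ℝ 2 μ) := fun n =>
    {x | Cls C μ x ∧ ∫ y, LZ s μ x y ∂ν₁ ≤ a n ∧ ∫ y, LZ s μ x y ∂ν₂ ≤ b}
  obtain ⟨x, hx⟩ : ∃ x, ∀ n, x ∈ K n := by
    refine nested_convex K ?_ ?_ ?_ ?_ ‖(memLp_bound hq h C).toLp‖ ?_
    · exact fun n m hnm x hx => ⟨hx.1, hx.2.1.trans (ha hnm), hx.2.2⟩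
    · intro n
      obtain ⟨u, hu, h1, h2⟩ := hne n
      have hm : MemLp u 2 μ := by
        refine (memLp_bound hq h C).mono hu.gr.meas ?_
        filter_upwards [hu.gr.abs_le] with x hx
        exact hx.trans (le_abs_self _)
      have he := hm.coeFn_toLp.symm
      refine ⟨hm.toLp, hu.congr he, ?_, ?_⟩
      · rwa [← LZ_congr he]
      · rwa [← LZ_congr he]
    · intro n
      refine IsSeqClosed.isClosed fun X x hX hlim => ?_
      obtain ⟨ns, -, hns⟩ := (tendstoInMeasure_of_tendsto_Lp hlim).exists_seq_tendsto_ae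
      refine ⟨Cls.of_tendsto hq h (fun j => (hX (ns j)).1) hns, ?_, ?_⟩
      · exact le_of_tendsto' (Cls.tendsto_integral_LZ hq hs h h₁ (fun j => (hX (ns j)).1) hns)
          fun j => (hX (ns j)).2.1
      · exact le_of_tendsto' (Cls.tendsto_integral_LZ hq hs h h₂ (fun j => (hX (ns j)).1) hns)
          fun j => (hX (ns j)).2.2
    · intro n x hx y hy c d hc hd hcd
      have he : (fun z => c * x z + d * y z) =ᵐ[μ] (c • x + d • y : Lp ℝ 2 μ) := by
        filter_upwards [Lp.coeFn_add (c • x) (d • y), Lp.coeFn_smul c x, Lp.coeFn_smul d y]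
          with z h1 h2 h3
        rw [h1, Pi.add_apply, h2, h3]
        rfl
      refine ⟨(hx.1.convex hq h hy.1 hc hd hcd).congr he, ?_, ?_⟩
      · rw [← LZ_congr he]
        refine (hx.1.integral_LZ_convex hq hs h h₁ hy.1 hc hd hcd).trans ?_
        have := mul_le_mul_of_nonneg_left hx.2.1 hc
        have := mul_le_mul_of_nonneg_left hy.2.1 hd
        calc _ ≤ (c + d) * a n := by linarith
          _ = a n := by rw [hcd, one_mul]
      · rw [← LZ_congr he]
        refine (hx.1.integral_LZ_convex hq hs h h₂ hy.1 hc hd hcd).trans ?_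
        have := mul_le_mul_of_nonneg_left hx.2.2 hc
        have := mul_le_mul_of_nonneg_left hy.2.2 hd
        calc _ ≤ (c + d) * b := by linarith
          _ = b := by rw [hcd, one_mul]
    · intro x hx
      refine Lp.norm_le_norm_of_ae_le ?_
      filter_upwards [hx.1.gr.abs_le, (memLp_bound hq h C).coeFn_toLp] with z h1 h2
      rw [h2]
      exact h1.trans (le_abs_self _)
  exact ⟨x, (hx 0).1, fun n => (hx n).2.1, (hx 0).2.2⟩

/-! ### The Schrödinger system -/

/-- A kernel `exp h` whose second marginal density is identically `1` has total mass `1`. -/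
lemma prod_exp_of_marginal {h : E × E → ℝ} (hm : AEStronglyMeasurable h (μ.prod ν))
    (h2 : ∀ y, ∫ x, exp (h (x, y)) ∂μ = 1) :
    Integrable (fun p => exp (h p)) (μ.prod ν) ∧ ∫ p, exp (h p) ∂(μ.prod ν) = 1 := by
  have hi : Integrable (fun p => exp (h p)) (μ.prod ν) := by
    rw [integrable_prod_iff' (continuous_exp.comp_aestronglyMeasurable hm)]
    refine ⟨ae_of_all _ fun y => integrable_of_integral_eq_one (h2 y), ?_⟩
    simp only [Real.norm_eq_abs, abs_exp, h2]
    exact integrable_const _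
  refine ⟨hi, ?_⟩
  rw [integral_prod_symm _ hi]
  simp [h2]

lemma tilted_snd {h : E × E → ℝ} (hm : Measurable h)
    (h2 : ∀ y, ∫ x, exp (h (x, y)) ∂μ = 1) : ((μ.prod ν).tilted h).snd = ν := by
  obtain ⟨-, h1⟩ := prod_exp_of_marginal (ν := ν) hm.aestronglyMeasurable h2
  ext t ht
  rw [Measure.snd_apply ht, tilted_apply _ h, h1]
  simp only [div_one]
  have : (Prod.snd ⁻¹' t : Set (E × E)) = Set.univ ×ˢ t := by ext; simp
  rw [this, ← Measure.prod_restrict, lintegral_prod_symm' _ (by fun_prop), Measure.restrict_univ]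
  have : ∀ y, ∫⁻ x, ENNReal.ofReal (exp (h (x, y))) ∂μ = 1 := by
    intro y
    rw [← ofReal_integral_eq_lintegral_ofReal (integrable_of_integral_eq_one (h2 y))
      (ae_of_all _ fun x => (exp_pos _).le), h2]
    simp
  simp [this]

lemma tilted_fst {h : E × E → ℝ} (hm : Measurable h)
    (h1 : ∀ x, ∫ y, exp (h (x, y)) ∂ν = 1) (h2 : ∀ y, ∫ x, exp (h (x, y)) ∂μ = 1) :
    ((μ.prod ν).tilted h).fst = μ := by
  obtain ⟨-, h3⟩ := prod_exp_of_marginal (ν := ν) hm.aestronglyMeasurable h2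
  ext t ht
  rw [Measure.fst_apply ht, tilted_apply _ h, h3]
  simp only [div_one]
  have : (Prod.fst ⁻¹' t : Set (E × E)) = t ×ˢ Set.univ := by ext; simp
  rw [this, ← Measure.prod_restrict, lintegral_prod _ (by fun_prop), Measure.restrict_univ]
  have : ∀ x, ∫⁻ y, ENNReal.ofReal (exp (h (x, y))) ∂ν = 1 := by
    intro x
    rw [← ofReal_integral_eq_lintegral_ofReal (integrable_of_integral_eq_one (h1 x))
      (ae_of_all _ fun x => (exp_pos _).le), h1]
    simp
  simp [this]

lemma integrable_fst {γ : Measure (E × E)} (hγ : γ.fst = μ) {F : E → ℝ} (hF : Integrable F μ) :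
    Integrable (fun p : E × E => F p.1) γ := by
  subst hγ
  exact hF.comp_measurable measurable_fst

lemma integral_fst {γ : Measure (E × E)} (hγ : γ.fst = μ) {F : E → ℝ} (hF : Integrable F μ) :
    ∫ p, F p.1 ∂γ = ∫ x, F x ∂μ := by
  subst hγ
  exact (integral_map measurable_fst.aemeasurable hF.aestronglyMeasurable).symm

lemma integrable_snd {γ : Measure (E × E)} (hγ : γ.snd = μ) {F : E → ℝ} (hF : Integrable F μ) :
    Integrable (fun p : E × E => F p.2) γ := by
  subst hγ
  exact hF.comp_measurable measurable_snd

lemma integral_snd {γ : Measure (E × E)} (hγ : γ.snd = μ) {F : E → ℝ} (hF : Integrable F μ) :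
    ∫ p, F p.2 ∂γ = ∫ x, F x ∂μ := by
  subst hγ
  exact (integral_map measurable_snd.aemeasurable hF.aestronglyMeasurable).symm

/-- The log-density `u(x) + v(y) + s ⟪x, y⟫` of the kernel attached to two potentials. -/
noncomputable def lk (s : ℝ) (u v : E → ℝ) (p : E × E) : ℝ := u p.1 + v p.2 + s * inner ℝ p.1 p.2

lemma lk_aesm (hu : AEStronglyMeasurable u μ) (hv : AEStronglyMeasurable v ν) :
    AEStronglyMeasurable (lk s u v) (μ.prod ν) :=
  (hu.comp_fst.add hv.comp_snd).add (by fun_prop)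

lemma exp_lk_left (x y : E) : exp (lk s u v (x, y)) = exp (v y) * exp (u x + s * inner ℝ x y) := by
  rw [← exp_add]; unfold lk; congr 1; ring

lemma exp_lk_right (x y : E) : exp (lk s u v (x, y)) = exp (u x) * exp (v y + s * inner ℝ y x) := by
  rw [← exp_add, real_inner_comm]; unfold lk; congr 1; ring

lemma integral_lk_left (hq : 0 < q) (hs : 0 ≤ s) (h : SG q B μ) (hu : Gr C μ u) (y : E) :
    ∫ x, exp (lk s u v (x, y)) ∂μ = exp (v y + LZ s μ u y) := by
  simp only [exp_lk_left]
  rw [integral_const_mul, ← hu.exp_LZ hq hs h, exp_add]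

lemma integral_lk_right (hq : 0 < q) (hs : 0 ≤ s) (h : SG q B ν) (hv : Gr C ν v) (x : E) :
    ∫ y, exp (lk s u v (x, y)) ∂ν = exp (u x + LZ s ν v x) := by
  simp only [exp_lk_right]
  rw [integral_const_mul, ← hv.exp_LZ hq hs h, exp_add]

/-- After one half-step of the Sinkhorn iteration, the discrepancy of the other marginal still has
total mass one. -/
lemma integral_exp_half_step (hq : 0 < q) (hs : 0 ≤ s) (h : SG q B μ) (h' : SG q B ν) {C' : ℝ}
    (hu : Gr C μ u) (hv : Gr C' ν v) (hvu : ∀ y, v y = -LZ s μ u y) :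
    Integrable (fun x => exp (u x + LZ s ν v x)) μ ∧ ∫ x, exp (u x + LZ s ν v x) ∂μ = 1 := by
  obtain ⟨hi, h1⟩ := prod_exp_of_marginal (lk_aesm (s := s) hu.meas hv.meas) fun y => by
    rw [integral_lk_left hq hs h hu, hvu]; simp
  have hm := hi.integral_prod_left
  rw [integral_prod _ hi] at h1
  simp only [integral_lk_right hq hs h' hv] at h1 hm
  exact ⟨hm, h1⟩

/-- Jensen's inequality for the exponential, with its equality case. -/
lemma ae_zero_of_integral_exp {X : Type*} [MeasurableSpace X] {ρ : Measure X}
    [IsProbabilityMeasure ρ] {f : X → ℝ} (hf : Integrable f ρ)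
    (he : Integrable (fun x => exp (f x)) ρ) (h1 : ∫ x, exp (f x) ∂ρ = 1) :
    ∫ x, f x ∂ρ ≤ 0 ∧ (0 ≤ ∫ x, f x ∂ρ → f =ᵐ[ρ] 0) := by
  have hi : Integrable (fun x => exp (f x) - 1 - f x) ρ := (he.sub (integrable_const 1)).sub hf
  have hnn : ∀ x, 0 ≤ exp (f x) - 1 - f x := fun x => by linarith [add_one_le_exp (f x)]
  have hval : ∫ x, (exp (f x) - 1 - f x) ∂ρ = -∫ x, f x ∂ρ := by
    have e1 : ∫ x, (exp (f x) - 1) ∂ρ = 0 := by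
      rw [integral_sub he (integrable_const 1), h1]; simp
    have e2 : Integrable (fun x => exp (f x) - 1) ρ := he.sub (integrable_const 1)
    rw [integral_sub e2 hf, e1, zero_sub]
  have h0 : 0 ≤ ∫ x, (exp (f x) - 1 - f x) ∂ρ := integral_nonneg hnn
  refine ⟨by linarith, fun hle => ?_⟩
  have hz : ∫ x, (exp (f x) - 1 - f x) ∂ρ = 0 := le_antisymm (by linarith) h0
  rw [integral_eq_zero_iff_of_nonneg hnn hi] at hz
  filter_upwards [hz] with x hx
  by_contra hne
  have := add_one_lt_exp hne
  simp only [Pi.zero_apply] at hx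
  linarith

/-- Continuous potentials solving the Schrödinger system for `(μ, ν)` everywhere, with explicit
growth bounds and normalized by `∫ u dμ = 0`. -/
structure Sol (s C : ℝ) (μ ν : Measure E) (u v : E → ℝ) : Prop where
  eq1 : ∀ x, u x = -LZ s ν v x
  eq2 : ∀ y, v y = -LZ s μ u y
  cu : Continuous u
  cv : Continuous v
  ubd : ∀ x, u x ≤ C * (1 + ‖x‖) ∧ -(C * (1 + ‖x‖ ^ 2)) ≤ u x
  vbd : ∀ x, v x ≤ C * (1 + ‖x‖) ∧ -(C * (1 + ‖x‖ ^ 2)) ≤ v x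
  mean : ∫ x, u x ∂μ = 0

lemma Gr.of_forall (hc : Continuous u)
    (h : ∀ x, u x ≤ C * (1 + ‖x‖) ∧ -(C * (1 + ‖x‖ ^ 2)) ≤ u x) : Gr C μ u :=
  ⟨hc.aestronglyMeasurable, ae_of_all _ fun x => (h x).1, ae_of_all _ fun x => (h x).2⟩

lemma Sol.gru (h : Sol s C μ ν u v) {ρ : Measure E} [IsProbabilityMeasure ρ] : Gr C ρ u :=
  Gr.of_forall h.cu h.ubd

lemma Sol.grv (h : Sol s C μ ν u v) {ρ : Measure E} [IsProbabilityMeasure ρ] : Gr C ρ v :=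
  Gr.of_forall h.cv h.vbd

lemma Sol.cls (h : Sol s C μ ν u v) : Cls C μ u := ⟨h.gru, h.mean⟩

/-- A minimizer of `u ↦ ∫ LZ s μ u dν` over the class of normalized potentials. -/
lemma exists_minimizer (hq : 0 < q) (hs : 0 ≤ s) (h : SG q B μ) (h' : SG q B ν) (hC : 0 ≤ C) :
    ∃ u, Cls C μ u ∧ ∀ w, Cls C μ w → ∫ y, LZ s μ u y ∂ν ≤ ∫ y, LZ s μ w y ∂ν := by
  let S : Set ℝ := {r | ∃ w, Cls C μ w ∧ ∫ y, LZ s μ w y ∂ν = r}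
  have h0 : Cls C μ (fun _ => 0) :=
    ⟨⟨by fun_prop, ae_of_all _ fun x => by positivity,
      ae_of_all _ fun x => neg_nonpos.2 (by positivity)⟩, by simp⟩
  have hSne : S.Nonempty := ⟨_, _, h0, rfl⟩
  have hSb : BddBelow S := by
    refine ⟨-(bd s q B C * (1 + q * B)), ?_⟩
    rintro r ⟨w, hw, rfl⟩
    exact (abs_le.1 (hw.abs_integral_LZ_le hq hs h h')).1
  obtain ⟨u, hu, hun, -⟩ := exists_cls_of_forall (s := s) (C := C) hq hs h h' h'
    (a := fun n => sInf S + 1 / ((n : ℝ) + 1)) (b := sInf S + 1)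
    (fun n m hnm => by simp only; gcongr) (fun n => by
      have hp : 0 < 1 / ((n : ℝ) + 1) := by positivity
      have hp1 : 1 / ((n : ℝ) + 1) ≤ 1 := by
        rw [div_le_one (by positivity)]; linarith [n.cast_nonneg (α := ℝ)]
      obtain ⟨r, ⟨w, hw, rfl⟩, hr⟩ := exists_lt_of_csInf_lt hSne (lt_add_of_pos_right (sInf S) hp)
      exact ⟨w, hw, hr.le, by linarith⟩)
  refine ⟨u, hu, fun w hw => ?_⟩
  have hlim : Tendsto (fun n : ℕ => sInf S + 1 / ((n : ℝ) + 1)) atTop (𝓝 (sInf S + 0)) :=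
    tendsto_one_div_add_atTop_nhds_zero_nat.const_add _
  rw [add_zero] at hlim
  exact (ge_of_tendsto' hlim hun).trans (csInf_le hSb ⟨w, hw, rfl⟩)

/-- Existence of Schrödinger potentials, with a growth constant depending only on the
sub-Gaussian parameters. A minimizer `w` over the class of normalized potentials is improved by
two half-steps `v = -LZ s μ w`, `u = -LZ s ν v` of the Sinkhorn iteration; as `u` is again in the
class after recentring, minimality leaves no room for strict improvement. -/
lemma exists_sol (hq : 0 < q) (hs : 0 ≤ s) (hB1 : 1 ≤ B) :
    ∃ C, ∀ (μ ν : Measure E) [IsProbabilityMeasure μ] [IsProbabilityMeasure ν],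
      SG q B μ → SG q B ν → ∃ u v, Sol s C μ ν u v := by
  have hlB := log_nonneg hB1
  -- `D` is the slope of the linear upper bound on a half-step, `c0` bounds the minimal value (test
  -- with the zero potential), `C1` is the resulting growth constant of the second half-step and `M`
  -- bounds its mean. None of them depends on the constant `C2` of the class being minimized over,
  -- so `C2` may be chosen large enough for the recentred second half-step to lie in the class.
  obtain ⟨D, hDdef⟩ : ∃ D, D = s * (q * B + 1) := ⟨_, rfl⟩
  have hD : 0 ≤ D := by rw [hDdef]; positivity
  have hbd : ∀ C, 0 ≤ C → 0 ≤ bd s q B C := fun C hC => by unfold bd; positivity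
  obtain ⟨c0, hc0def⟩ : ∃ c0, c0 = bd s q B 0 * (1 + q * B) := ⟨_, rfl⟩
  have hc0 : 0 ≤ c0 := by rw [hc0def]; have := hbd 0 le_rfl; positivity
  obtain ⟨C1, hC1def⟩ : ∃ C1, C1 = c0 + D + log B + q * (D ^ 2 + s ^ 2) / 2 := ⟨_, rfl⟩
  have hC1 : 0 ≤ C1 := by rw [hC1def]; positivity
  obtain ⟨M, hMdef⟩ : ∃ M, M = 2 * C1 * (1 + q * B) := ⟨_, rfl⟩
  have hM : 0 ≤ M := by rw [hMdef]; positivity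
  obtain ⟨C2, hC2def⟩ : ∃ C2, C2 = C1 + M := ⟨_, rfl⟩
  have hC2 : 0 ≤ C2 := by rw [hC2def]; positivity
  have hb2 := hbd C2 hC2
  refine ⟨C2 + D + bd s q B C2, fun μ ν _ _ h h' => ?_⟩
  obtain ⟨w, hw, hmin⟩ := exists_minimizer hq hs h h' hC2
  have hw0 : ∫ y, LZ s μ w y ∂ν ≤ c0 := by
    have h0 : Cls 0 μ (fun _ => (0 : ℝ)) :=
      ⟨⟨by fun_prop, ae_of_all _ fun x => by simp, ae_of_all _ fun x => by simp⟩, by simp⟩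
    have h0' : Cls C2 μ (fun _ => (0 : ℝ)) :=
      ⟨⟨by fun_prop, ae_of_all _ fun x => by positivity,
        ae_of_all _ fun x => neg_nonpos.2 (by positivity)⟩, by simp⟩
    rw [hc0def]
    exact (hmin _ h0').trans (abs_le.1 (h0.abs_integral_LZ_le hq hs h h')).2
  let v : E → ℝ := fun y => -LZ s μ w y
  have cv : Continuous v := (hw.gr.continuous_LZ hq hs h).neg
  have hvD : ∀ y, v y ≤ D * ‖y‖ := fun y => by
    have := hw.gr.le_LZ hq hs h y
    rw [hw.mean] at this
    simp only [v, hDdef]; linarith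
  have hvD' : ∀ y, v y ≤ D * (1 + ‖y‖) := fun y => by
    have := hvD y; linarith
  have hvlo : ∀ y, -(bd s q B C2 * (1 + ‖y‖ ^ 2)) ≤ v y := fun y =>
    neg_le_neg (abs_le.1 (hw.gr.abs_LZ_le hq hs h hw.mean y)).2
  have grv : Gr (C2 + D + bd s q B C2) ν v := by
    refine Gr.of_forall cv fun y => ⟨(hvD' y).trans ?_, le_trans ?_ (hvlo y)⟩
    · gcongr; linarith
    · apply neg_le_neg; gcongr; linarith
  let u : E → ℝ := fun x => -LZ s ν v x
  have cu : Continuous u := (grv.continuous_LZ hq hs h').neg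
  have hub : ∀ x, u x ≤ C1 * (1 + ‖x‖) ∧ -(C1 * (1 + ‖x‖ ^ 2)) ≤ u x := by
    intro x
    constructor
    · have h1 := grv.le_LZ hq hs h' x
      have h2 : ∫ y, v y ∂ν = -∫ y, LZ s μ w y ∂ν := integral_neg _
      have h3 : u x ≤ c0 + D * ‖x‖ := by
        simp only [u, hDdef]; linarith
      refine h3.trans ?_
      have : 0 ≤ (C1 - D) * ‖x‖ := by
        have : 0 ≤ C1 - D := by
          rw [hC1def]
          have : 0 ≤ c0 + log B + q * (D ^ 2 + s ^ 2) / 2 := by positivity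
          linarith
        positivity
      have : c0 ≤ C1 := by
        rw [hC1def]
        have : 0 ≤ D + log B + q * (D ^ 2 + s ^ 2) / 2 := by positivity
        linarith
      linarith
    · have h1 := grv.LZ_le hq hs h' (ae_of_all _ hvD') x
      have h4 : q * (D + s * ‖x‖) ^ 2 / 4 ≤ q * (D ^ 2 + s ^ 2) / 2 * (1 + ‖x‖ ^ 2) := by
        have : (D + s * ‖x‖) ^ 2 ≤ 2 * ((D ^ 2 + s ^ 2) * (1 + ‖x‖ ^ 2)) := by
          nlinarith [sq_nonneg (D - s * ‖x‖), sq_nonneg s, sq_nonneg (D * ‖x‖)]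
        have := mul_le_mul_of_nonneg_left this hq.le
        nlinarith
      have h5 : 0 ≤ c0 * (1 + ‖x‖ ^ 2) + (D + log B) * ‖x‖ ^ 2 := by positivity
      simp only [u, hC1def]
      linarith
  have gru1 : Gr C1 μ u := Gr.of_forall cu hub
  obtain ⟨m, hm⟩ : ∃ m, m = ∫ x, u x ∂μ := ⟨_, rfl⟩
  have hmM : |m| ≤ M := by
    rw [hm, ← Real.norm_eq_abs, hMdef]
    calc _ ≤ ∫ x, 2 * C1 * (1 + ‖x‖ ^ 2) ∂μ :=
          norm_integral_le_of_norm_le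
            (((integrable_const (1 : ℝ)).add (h.integrable_sq hq)).const_mul _) gru1.abs_le
      _ = 2 * C1 * (1 + ∫ x, ‖x‖ ^ 2 ∂μ) := by
          rw [integral_const_mul, integral_add (integrable_const _) (h.integrable_sq hq)]; simp
      _ ≤ _ := by gcongr; exact h.integral_sq_le hq
  have hiu := gru1.integrable hq h
  have clsu : Cls C2 μ (fun x => u x + -m) := by
    refine ⟨Gr.of_forall (cu.add continuous_const) fun x => ?_, ?_⟩
    · obtain ⟨h1, h2⟩ := hub x
      obtain ⟨h3, h4⟩ := abs_le.1 hmM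
      have h5 : 0 ≤ M * ‖x‖ := by positivity
      have h6 : 0 ≤ M * ‖x‖ ^ 2 := by positivity
      rw [hC2def]
      constructor <;> linarith
    · rw [integral_add hiu (integrable_const _), ← hm]; simp
  have hiLu : Integrable (LZ s μ u) ν := by
    have := (clsu.integrable_LZ hq hs h h').add (integrable_const m)
    refine this.congr (ae_of_all _ fun y => ?_)
    simp [LZ_add_const hq hs h gru1]
  have hle : ∫ y, LZ s μ w y ∂ν ≤ ∫ y, LZ s μ u y ∂ν - m := by
    refine (hmin _ clsu).trans (le_of_eq ?_)
    simp only [LZ_add_const hq hs h gru1]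
    rw [integral_add hiLu (integrable_const _)]; simp [sub_eq_add_neg]
  have hiLw := hw.integrable_LZ hq hs h h'
  have hiw := hw.gr.integrable hq h
  -- Jensen's inequality on the `ν` side gives `∫ LZ s μ u dν ≤ ∫ LZ s μ w dν`; with the minimality
  -- of `w` this forces `m ≤ 0`. Hence `w + LZ s ν v`, whose mean is `-m`, is in the equality case
  -- of Jensen's inequality on the `μ` side, so that `w` agrees with `u` almost everywhere.
  obtain ⟨e1, e2⟩ := integral_exp_half_step hq hs h h' hw.gr grv (fun _ => rfl)
  obtain ⟨e3, e4⟩ := integral_exp_half_step hq hs h' h grv gru1 (fun _ => rfl)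
  have hiv : Integrable v ν := hiLw.neg
  have j1 := (ae_zero_of_integral_exp (hiv.add hiLu) e3 e4).1
  have j2 : ∫ y, (v + LZ s μ u) y ∂ν = -∫ y, LZ s μ w y ∂ν + ∫ y, LZ s μ u y ∂ν := by
    simp only [Pi.add_apply]
    rw [integral_add hiv hiLu, integral_neg]
  have hiLv : Integrable (LZ s ν v) μ := by
    refine hiu.neg.congr (ae_of_all _ fun x => ?_)
    simp [u]
  have j3 := (ae_zero_of_integral_exp (hiw.add hiLv) e1 e2).2
  have j4 : ∫ x, (w + LZ s ν v) x ∂μ = -m := by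
    simp only [Pi.add_apply]
    rw [integral_add hiw hiLv, hw.mean, hm, integral_neg]; simp
  have hae : w =ᵐ[μ] u := by
    filter_upwards [j3 (by linarith)] with x hx
    simp only [Pi.add_apply, Pi.zero_apply] at hx
    simp only [u]; linarith
  have hmean : ∫ x, u x ∂μ = 0 := by rw [← integral_congr_ae hae]; exact hw.mean
  refine ⟨u, v, fun x => rfl, fun y => ?_, cu, cv, fun x => ?_, fun y => ?_, hmean⟩
  · rw [← LZ_congr hae]
  · obtain ⟨h1, h2⟩ := hub x
    refine ⟨h1.trans ?_, le_trans ?_ h2⟩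
    · gcongr; linarith
    · apply neg_le_neg; gcongr; linarith
  · refine ⟨(hvD' y).trans ?_, le_trans ?_ (hvlo y)⟩
    · gcongr; linarith
    · apply neg_le_neg; gcongr; linarith

lemma Sol.marg_left (hq : 0 < q) (hs : 0 ≤ s) (h : SG q B μ) (hS : Sol s C μ ν u v) (y : E) :
    ∫ x, exp (lk s u v (x, y)) ∂μ = 1 := by
  rw [integral_lk_left hq hs h hS.gru, hS.eq2]; simp

lemma Sol.marg_right (hq : 0 < q) (hs : 0 ≤ s) (h' : SG q B ν) (hS : Sol s C μ ν u v) (x : E) :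
    ∫ y, exp (lk s u v (x, y)) ∂ν = 1 := by
  rw [integral_lk_right hq hs h' hS.grv, hS.eq1]; simp

lemma Sol.integral_v (hS : Sol s C μ ν u v) {ρ : Measure E} :
    ∫ y, v y ∂ρ = -∫ y, LZ s μ u y ∂ρ := by
  rw [← integral_neg]
  simp only [← hS.eq2]

/-- Schrödinger potentials are the unique minimizers of the normalized dual problem. This is
Jensen's inequality for the exponential, with its equality case, under the optimal coupling. -/
lemma Sol.minimal (hq : 0 < q) (hs : 0 ≤ s) (h : SG q B μ) (h' : SG q B ν)
    (hS : Sol s C μ ν u v) {w : E → ℝ} (hw : Cls C μ w) :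
    ∫ y, LZ s μ u y ∂ν ≤ ∫ y, LZ s μ w y ∂ν ∧
      (∫ y, LZ s μ w y ∂ν ≤ ∫ y, LZ s μ u y ∂ν → w =ᵐ[μ] u) := by
  have cl : Measurable (lk s u v) := by
    have := hS.cu
    have := hS.cv
    unfold lk
    fun_prop
  obtain ⟨hi, h1⟩ := prod_exp_of_marginal (ν := ν) cl.aestronglyMeasurable
    (hS.marg_left hq hs h)
  obtain ⟨γ, hγ⟩ : ∃ γ, γ = (μ.prod ν).tilted (lk s u v) := ⟨_, rfl⟩
  have hfst : γ.fst = μ := hγ ▸ tilted_fst cl (hS.marg_right hq hs h') (hS.marg_left hq hs h)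
  have hsnd : γ.snd = ν := hγ ▸ tilted_snd cl (hS.marg_left hq hs h)
  have : IsProbabilityMeasure γ := hγ ▸ isProbabilityMeasure_tilted hi
  have hiF : Integrable (fun x => w x - u x) μ :=
    (hw.gr.integrable hq h).sub (hS.gru.integrable hq h)
  have hiLw := hw.integrable_LZ hq hs h h'
  have hiG : Integrable (fun y => -LZ s μ w y - v y) ν := hiLw.neg.sub (hS.grv.integrable hq h')
  have iF := integrable_fst hfst hiF
  have iG := integrable_snd hsnd hiG
  have eF : ∫ p, (w p.1 - u p.1) ∂γ = 0 := by
    rw [integral_fst hfst hiF, integral_sub (hw.gr.integrable hq h) (hS.gru.integrable hq h),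
      hw.mean, hS.mean, sub_zero]
  have eG : ∫ p, (-LZ s μ w p.2 - v p.2) ∂γ = ∫ y, LZ s μ u y ∂ν - ∫ y, LZ s μ w y ∂ν := by
    have hn : Integrable (fun y => -LZ s μ w y) ν := hiLw.neg
    rw [integral_snd hsnd hiG, integral_sub hn (hS.grv.integrable hq h'), hS.integral_v,
      integral_neg]
    ring
  obtain ⟨hi2, h2⟩ := prod_exp_of_marginal (μ := μ) (ν := ν)
    (lk_aesm (s := s) (v := fun y => -LZ s μ w y) hw.gr.meas hiLw.neg.aestronglyMeasurable)
    fun y => by rw [integral_lk_left hq hs h hw.gr]; simp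
  have hpt : ∀ p : E × E, exp (lk s u v p) * exp (w p.1 - u p.1 + (-LZ s μ w p.2 - v p.2))
      = exp (lk s w (fun y => -LZ s μ w y) p) := by
    intro p
    rw [← exp_add]; congr 1; unfold lk; ring
  have hie : Integrable (fun p : E × E => exp (w p.1 - u p.1 + (-LZ s μ w p.2 - v p.2))) γ := by
    rw [hγ, integrable_tilted_iff hi]
    simpa only [smul_eq_mul, hpt] using hi2
  have he : ∫ p : E × E, exp (w p.1 - u p.1 + (-LZ s μ w p.2 - v p.2)) ∂γ = 1 := by
    rw [hγ, integral_tilted, h1]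
    simpa only [smul_eq_mul, hpt, div_one] using h2
  obtain ⟨k1, k2⟩ := ae_zero_of_integral_exp (iF.add iG) hie he
  have e3 : ∫ p, ((fun p : E × E => w p.1 - u p.1) + fun p : E × E => -LZ s μ w p.2 - v p.2) p ∂γ
      = ∫ y, LZ s μ u y ∂ν - ∫ y, LZ s μ w y ∂ν := by
    simp only [Pi.add_apply]
    rw [integral_add iF iG, eF, eG, zero_add]
  rw [e3] at k1 k2
  refine ⟨by linarith, fun hle => ?_⟩
  have hae : ∀ᵐ p ∂(μ.prod ν), w p.1 - u p.1 + (-LZ s μ w p.2 - v p.2) = 0 := by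
    have := k2 (by linarith)
    rw [hγ] at this
    exact (absolutelyContinuous_tilted hi).ae_le this
  have hae2 := Measure.ae_ae_of_ae_prod hae
  obtain ⟨x0, hx0⟩ := hae2.exists
  have hc : ∀ᵐ x ∂μ, w x - u x = w x0 - u x0 := by
    filter_upwards [hae2] with x hx
    obtain ⟨y, h3, h4⟩ := (hx.and hx0).exists
    simp only at h3 h4
    linarith
  have hz : w x0 - u x0 = 0 := by
    have := integral_congr_ae hc
    rw [integral_sub (hw.gr.integrable hq h) (hS.gru.integrable hq h), hw.mean, hS.mean] at this
    simpa using this.symm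
  filter_upwards [hc] with x hx
  linarith

/-- Stability: near-minimizers for `ν` are, up to a small error, at least as large as the minimizer
when tested against any other sub-Gaussian measure `ρ`. Otherwise compactness would produce an
exact minimizer violating the bound, contradicting uniqueness. -/
lemma Sol.stability (hq : 0 < q) (hs : 0 ≤ s) (h : SG q B μ) (h' : SG q B ν)
    (hS : Sol s C μ ν u v) {ρ : Measure E} [IsProbabilityMeasure ρ] (hρ : SG q B ρ) {η : ℝ}
    (hη : 0 < η) :
    ∃ δ > 0, ∀ w, Cls C μ w → ∫ y, LZ s μ w y ∂ν ≤ ∫ y, LZ s μ u y ∂ν + δ →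
      ∫ y, LZ s μ u y ∂ρ - η ≤ ∫ y, LZ s μ w y ∂ρ := by
  by_contra! hcon
  obtain ⟨w, hw, hwn, hwρ⟩ := exists_cls_of_forall (s := s) (C := C) hq hs h h' hρ
    (a := fun n => ∫ y, LZ s μ u y ∂ν + 1 / ((n : ℝ) + 1)) (b := ∫ y, LZ s μ u y ∂ρ - η)
    (fun n m hnm => by simp only; gcongr) (fun n => by
      obtain ⟨w, h1, h2, h3⟩ := hcon (1 / ((n : ℝ) + 1)) (by positivity)
      exact ⟨w, h1, h2, h3.le⟩)
  have hlim : Tendsto (fun n : ℕ => ∫ y, LZ s μ u y ∂ν + 1 / ((n : ℝ) + 1)) atTop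
      (𝓝 (∫ y, LZ s μ u y ∂ν + 0)) :=
    tendsto_one_div_add_atTop_nhds_zero_nat.const_add _
  rw [add_zero] at hlim
  have hae := (hS.minimal hq hs h h' hw).2 (ge_of_tendsto' hlim hwn)
  rw [LZ_congr hae] at hwρ
  linarith

end LogLaplace

/-! ### Duality for the entropic cost -/

section Duality

set_option linter.unusedSectionVars false

open Filter Topology Real

variable {d : ℕ} {ε : ℝ} {α β : Measure (EuclideanSpace ℝ (Fin d))} [IsProbabilityMeasure α]
  [IsProbabilityMeasure β] {f g : EuclideanSpace ℝ (Fin d) → ℝ}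

lemma marg_of_eq (y : EuclideanSpace ℝ (Fin d))
    (h : exp (g y / ε) * ∫ x, exp ((f x - ‖x - y‖ ^ 2) / ε) ∂α = 1) :
    ∫ x, exp ((f x + g y - ‖x - y‖ ^ 2) / ε) ∂α = 1 := by
  rw [← h, ← integral_const_mul]
  congr 1
  funext x
  rw [← exp_add]
  congr 1
  ring

/-- Gibbs' variational inequality. -/
lemma integral_le_integral_llr {X : Type*} [MeasurableSpace X] {γ ρ : Measure X}
    [IsProbabilityMeasure γ] [IsProbabilityMeasure ρ] {h : X → ℝ} (hac : γ ≪ ρ)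
    (hllr : Integrable (llr γ ρ) γ) (hh : Integrable h γ)
    (he : Integrable (fun x => exp (h x)) ρ) (h1 : ∫ x, exp (h x) ∂ρ = 1) :
    ∫ x, h x ∂γ ≤ ∫ x, llr γ ρ x ∂γ := by
  have := isProbabilityMeasure_tilted he
  have e := integral_llr_tilted_right hac hh he hllr
  have hac' : γ ≪ ρ.tilted h := hac.trans (absolutelyContinuous_tilted he)
  have := InformationTheory.toReal_klDiv_of_measure_eq hac' (by simp)
  have h0 : 0 ≤ ∫ x, llr γ (ρ.tilted h) x ∂γ := this ▸ ENNReal.toReal_nonneg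
  rw [h1, log_one] at e
  linarith

/-- Weak duality: potentials normalizing the second marginal bound the entropic cost below. -/
lemma le_OTe (hε : 0 < ε) (hf : Continuous f) (hg : Continuous g) (hfi : Integrable f α)
    (hgi : Integrable g β)
    (h2 : ∀ y, exp (g y / ε) * ∫ x, exp ((f x - ‖x - y‖ ^ 2) / ε) ∂α = 1) :
    ((∫ x, f x ∂α + ∫ y, g y ∂β : ℝ) : EReal) ≤ OTe d ε α β := by
  unfold OTe
  refine le_iInf fun γ => le_iInf fun hγ => le_iInf fun hfst => le_iInf fun hsnd => ?_
  by_cases hac : γ ≪ α.prod β ∧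
      Integrable (fun x => log (γ.rnDeriv (α.prod β) x).toReal) γ
  swap
  · rw [KLdiv, if_neg hac, EReal.coe_mul_top_of_pos hε, EReal.add_top_of_ne_bot (by simp)]
    exact le_top
  rw [KLdiv, if_pos hac]
  by_cases hfin : ∫⁻ p, ENNReal.ofReal (‖p.1 - p.2‖ ^ 2) ∂γ = ⊤
  · rw [hfin, ← EReal.coe_mul, EReal.coe_ennreal_top, EReal.top_add_coe]
    exact le_top
  have hc : Integrable (fun p : EuclideanSpace ℝ (Fin d) × EuclideanSpace ℝ (Fin d) =>
      ‖p.1 - p.2‖ ^ 2) γ := by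
    refine ⟨by fun_prop, ?_⟩
    rw [hasFiniteIntegral_iff_ofReal (ae_of_all _ fun p => by positivity)]
    exact lt_top_iff_ne_top.2 hfin
  rw [← ofReal_integral_eq_lintegral_ofReal hc (ae_of_all _ fun p => by positivity),
    EReal.coe_ennreal_ofReal, max_eq_left (integral_nonneg fun p => by positivity),
    ← EReal.coe_mul, ← EReal.coe_add, EReal.coe_le_coe_iff]
  have iF := integrable_fst hfst hfi
  have iG := integrable_snd hsnd hgi
  obtain ⟨k1, k2⟩ := prod_exp_of_marginal (μ := α) (ν := β)
    (h := fun p => (f p.1 + g p.2 - ‖p.1 - p.2‖ ^ 2) / ε)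
    (Continuous.aestronglyMeasurable (by fun_prop)) fun y => marg_of_eq y (h2 y)
  have key := integral_le_integral_llr hac.1 hac.2 (((iF.add iG).sub hc).div_const ε) k1 k2
  have e : ∫ p, (f p.1 + g p.2 - ‖p.1 - p.2‖ ^ 2) / ε ∂γ
      = (∫ x, f x ∂α + ∫ y, g y ∂β - ∫ p, ‖p.1 - p.2‖ ^ 2 ∂γ) / ε := by
    have iFG : Integrable (fun p : EuclideanSpace ℝ (Fin d) × EuclideanSpace ℝ (Fin d) =>
      f p.1 + g p.2) γ := iF.add iG
    rw [integral_div, integral_sub iFG hc, integral_add iF iG, integral_fst hfst hfi,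
      integral_snd hsnd hgi]
  change ∫ p, (f p.1 + g p.2 - ‖p.1 - p.2‖ ^ 2) / ε ∂γ ≤ _ at key
  rw [e, div_le_iff₀ hε] at key
  change _ ≤ _ + ε * ∫ x, llr γ (α.prod β) x ∂γ
  linarith

/-- Strong duality: the coupling with density `exp ((f ⊕ g - c) / ε)` is optimal. -/
lemma OTe_eq (hε : 0 < ε) (hα : Integrable (fun x => ‖x‖ ^ 2) α)
    (hβ : Integrable (fun x => ‖x‖ ^ 2) β)
    (hf : Continuous f) (hg : Continuous g) (hfi : Integrable f α) (hgi : Integrable g β)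
    (h1 : ∀ x, exp (f x / ε) * ∫ y, exp ((g y - ‖x - y‖ ^ 2) / ε) ∂β = 1)
    (h2 : ∀ y, exp (g y / ε) * ∫ x, exp ((f x - ‖x - y‖ ^ 2) / ε) ∂α = 1) :
    OTe d ε α β = ((∫ x, f x ∂α + ∫ y, g y ∂β : ℝ) : EReal) := by
  refine le_antisymm ?_ (le_OTe hε hf hg hfi hgi h2)
  let h : EuclideanSpace ℝ (Fin d) × EuclideanSpace ℝ (Fin d) → ℝ :=
    fun p => (f p.1 + g p.2 - ‖p.1 - p.2‖ ^ 2) / ε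
  have ch : Continuous h := by fun_prop
  have m2 : ∀ y, ∫ x, exp (h (x, y)) ∂α = 1 := fun y => marg_of_eq y (h2 y)
  have m1 : ∀ x, ∫ y, exp (h (x, y)) ∂β = 1 := by
    intro x
    rw [← marg_of_eq (f := g) (g := f) (α := β) (ε := ε) x (by
      simpa only [norm_sub_rev x] using h1 x)]
    congr 1
    funext y
    simp only [h, norm_sub_rev x y, add_comm (f x)]
  obtain ⟨k1, k2⟩ := prod_exp_of_marginal (ν := β) ch.measurable.aestronglyMeasurable m2
  have hP := isProbabilityMeasure_tilted k1
  have hfst := tilted_fst ch.measurable m1 m2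
  have hsnd := tilted_snd (ν := β) ch.measurable m2
  unfold OTe
  refine iInf_le_of_le ((α.prod β).tilted h) <| iInf_le_of_le hP <| iInf_le_of_le hfst <|
    iInf_le_of_le hsnd ?_
  have hac := tilted_absolutelyContinuous (α.prod β) h
  have iF := integrable_fst hfst hfi
  have iG := integrable_snd hsnd hgi
  have hc : Integrable (fun p : EuclideanSpace ℝ (Fin d) × EuclideanSpace ℝ (Fin d) =>
      ‖p.1 - p.2‖ ^ 2) ((α.prod β).tilted h) := by
    refine (((integrable_fst hfst hα).const_mul 2).add
      ((integrable_snd hsnd hβ).const_mul 2)).mono' (by fun_prop) (ae_of_all _ fun p => ?_)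
    rw [norm_of_nonneg (by positivity)]
    have := norm_sub_le p.1 p.2
    simp only [Pi.add_apply]
    nlinarith [sq_nonneg (‖p.1‖ - ‖p.2‖), norm_nonneg (p.1 - p.2)]
  have hi : Integrable h ((α.prod β).tilted h) := ((iF.add iG).sub hc).div_const ε
  have hlog : (fun x => log (((α.prod β).tilted h).rnDeriv (α.prod β) x).toReal)
      =ᵐ[(α.prod β).tilted h] h := by
    refine hac.ae_le ?_
    filter_upwards [log_rnDeriv_tilted_left_self k1] with x hx
    rw [hx, k2, log_one, sub_zero]
  have e : ∫ p, h p ∂((α.prod β).tilted h)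
      = (∫ x, f x ∂α + ∫ y, g y ∂β - ∫ p, ‖p.1 - p.2‖ ^ 2 ∂((α.prod β).tilted h)) / ε := by
    have iFG : Integrable (fun p : EuclideanSpace ℝ (Fin d) × EuclideanSpace ℝ (Fin d) =>
      f p.1 + g p.2) ((α.prod β).tilted h) := iF.add iG
    simp only [h]
    rw [integral_div, integral_sub iFG hc, integral_add iF iG, integral_fst hfst hfi,
      integral_snd hsnd hgi]
  rw [KLdiv, if_pos ⟨hac, hi.congr hlog.symm⟩, integral_congr_ae hlog, e,
    ← ofReal_integral_eq_lintegral_ofReal hc (ae_of_all _ fun p => by positivity),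
    EReal.coe_ennreal_ofReal, max_eq_left (integral_nonneg fun p => by positivity),
    ← EReal.coe_mul, ← EReal.coe_add, EReal.coe_le_coe_iff, mul_div_cancel₀ _ hε.ne']
  linarith

end Duality

/-! ### Entropic potentials, mixtures and first-order optimality -/

section Barycenter

open Filter Topology Real

variable {d : ℕ} {ε q B C : ℝ} {μ ν : Measure (EuclideanSpace ℝ (Fin d))}
  {u v : EuclideanSpace ℝ (Fin d) → ℝ}

lemma SG.mono {q' B' : ℝ} (hq : 0 < q) (hqq : q ≤ q') (hB : B ≤ B') (h : SG q B μ) :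
    SG q' B' μ := by
  have key : ∀ x : EuclideanSpace ℝ (Fin d), exp (‖x‖ ^ 2 / q') ≤ exp (‖x‖ ^ 2 / q) := by
    intro x; gcongr
  have hi : Integrable (fun x => exp (‖x‖ ^ 2 / q')) μ :=
    h.int.mono' (by fun_prop) (ae_of_all _ fun x => by
      rw [norm_of_nonneg (exp_pos _).le]; exact key x)
  exact ⟨hi, ((integral_mono hi h.int key).trans h.bound).trans hB⟩

lemma SubGaussian.exists_SG (h : SubGaussian d μ) : ∃ q B, 0 < q ∧ SG q B μ := by
  obtain ⟨q, hq, hi⟩ := h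
  refine ⟨q, _, hq, ⟨⟨by fun_prop, ?_⟩, le_rfl⟩⟩
  rwa [hasFiniteIntegral_iff_ofReal (ae_of_all _ fun p => (exp_pos _).le)]

lemma SG.subGaussian (hq : 0 < q) (h : SG q B μ) : SubGaussian d μ := by
  refine ⟨q, hq, ?_⟩
  rw [← hasFiniteIntegral_iff_ofReal (ae_of_all _ fun p => (exp_pos _).le)]
  exact h.int.2

/-- Finitely many sub-Gaussian measures share their sub-Gaussian parameters. -/
lemma exists_common_SG {ι : Type*} [Fintype ι] {ρ : ι → Measure (EuclideanSpace ℝ (Fin d))}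
    (h : ∀ i, IsProbabilityMeasure (ρ i) ∧ SubGaussian d (ρ i)) :
    ∃ q B, 0 < q ∧ 1 ≤ B ∧ ∀ i, SG q B (ρ i) := by
  choose q B hq hS using fun i => (h i).2.exists_SG
  have hB : ∀ i, 1 ≤ B i := fun i => by
    have := (h i).1
    exact (hS i).one_le (hq i)
  have hq0 : 0 ≤ ∑ i, q i := Finset.sum_nonneg fun i _ => (hq i).le
  have hB0 : 0 ≤ ∑ i, B i := Finset.sum_nonneg fun i _ => by linarith [hB i]
  refine ⟨1 + ∑ i, q i, 1 + ∑ i, B i, by linarith, by linarith, fun i => (hS i).mono (hq i) ?_ ?_⟩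
  · have := Finset.single_le_sum (f := q) (fun i _ => (hq i).le) (Finset.mem_univ i)
    linarith
  · have := Finset.single_le_sum (f := B) (fun i _ => by linarith [hB i]) (Finset.mem_univ i)
    linarith

lemma Sol.mono {s C' : ℝ} (hC : C ≤ C') (h : Sol s C μ ν u v) : Sol s C' μ ν u v where
  eq1 := h.eq1
  eq2 := h.eq2
  cu := h.cu
  cv := h.cv
  ubd x := ⟨(h.ubd x).1.trans (by gcongr), le_trans (by gcongr) (h.ubd x).2⟩
  vbd x := ⟨(h.vbd x).1.trans (by gcongr), le_trans (by gcongr) (h.vbd x).2⟩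
  mean := h.mean

/-- The entropic potential `ε u + ‖·‖²` attached to a normalized potential `u`. -/
noncomputable def pot (ε : ℝ) (u : EuclideanSpace ℝ (Fin d) → ℝ) (x : EuclideanSpace ℝ (Fin d)) :
    ℝ := ε * u x + ‖x‖ ^ 2

/-- Expanding the square turns the marginal condition for entropic potentials into the log-Laplace
equation with `s = 2 / ε`. -/
lemma pot_marg [IsProbabilityMeasure μ] (hε : 0 < ε) (hq : 0 < q) (h : SG q B μ) (hu : Gr C μ u)
    {y : EuclideanSpace ℝ (Fin d)} (hv : v y = -LZ (2 / ε) μ u y) :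
    exp (pot ε v y / ε) * ∫ x, exp ((pot ε u x - ‖x - y‖ ^ 2) / ε) ∂μ = 1 := by
  have e : ∀ x, exp ((pot ε u x - ‖x - y‖ ^ 2) / ε)
      = exp (-(‖y‖ ^ 2 / ε)) * exp (u x + 2 / ε * inner ℝ x y) := by
    intro x
    rw [← exp_add, pot, norm_sub_sq_real]
    congr 1
    field_simp
    ring
  simp only [e]
  rw [integral_const_mul, ← hu.exp_LZ hq (by positivity) h, ← exp_add, ← exp_add, pot, hv,
    exp_eq_one_iff]
  field_simp
  ring

lemma integrable_pot [IsProbabilityMeasure μ] (hq : 0 < q) (h : SG q B μ) (hu : Gr C μ u) :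
    Integrable (pot ε u) μ :=
  ((hu.integrable hq h).const_mul ε).add (h.integrable_sq hq)

lemma integral_pot [IsProbabilityMeasure μ] (hq : 0 < q) (h : SG q B μ) (hu : Gr C μ u) :
    ∫ x, pot ε u x ∂μ = ε * ∫ x, u x ∂μ + ∫ x, ‖x‖ ^ 2 ∂μ := by
  unfold pot
  rw [integral_add ((hu.integrable hq h).const_mul ε) (h.integrable_sq hq), integral_const_mul]

lemma continuous_pot (hu : Continuous u) : Continuous (pot ε u) := by
  unfold pot; fun_prop

section

variable [IsProbabilityMeasure μ] [IsProbabilityMeasure ν]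

lemma Sol.pot_eq_one_left (hε : 0 < ε) (hq : 0 < q) (h' : SG q B ν) (hS : Sol (2 / ε) C μ ν u v)
    (x : EuclideanSpace ℝ (Fin d)) :
    exp (pot ε u x / ε) * ∫ y, exp ((pot ε v y - ‖x - y‖ ^ 2) / ε) ∂ν = 1 := by
  simp only [norm_sub_rev x]
  exact pot_marg hε hq h' hS.grv (hS.eq1 x)

lemma Sol.pot_eq_one_right (hε : 0 < ε) (hq : 0 < q) (h : SG q B μ) (hS : Sol (2 / ε) C μ ν u v)
    (y : EuclideanSpace ℝ (Fin d)) :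
    exp (pot ε v y / ε) * ∫ x, exp ((pot ε u x - ‖x - y‖ ^ 2) / ε) ∂μ = 1 :=
  pot_marg hε hq h hS.gru (hS.eq2 y)

/-- The entropic cost in terms of the log-Laplace transform of the optimal potential. -/
lemma Sol.OTe (hε : 0 < ε) (hq : 0 < q) (h : SG q B μ) (h' : SG q B ν)
    (hS : Sol (2 / ε) C μ ν u v) :
    OTe d ε μ ν = ((∫ x, ‖x‖ ^ 2 ∂μ + ∫ y, ‖y‖ ^ 2 ∂ν - ε * ∫ y, LZ (2 / ε) μ u y ∂ν : ℝ) :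
      EReal) := by
  rw [OTe_eq hε (h.integrable_sq hq) (h'.integrable_sq hq) (continuous_pot hS.cu)
    (continuous_pot hS.cv) (integrable_pot hq h hS.gru) (integrable_pot hq h' hS.grv)
    (hS.pot_eq_one_left hε hq h') (hS.pot_eq_one_right hε hq h), integral_pot hq h hS.gru,
    integral_pot hq h' hS.grv, hS.mean, hS.integral_v]
  congr 1
  ring

end

lemma coe_sum_mul {ι : Type*} (t : Finset ι) (w r : ι → ℝ) :
    ∑ k ∈ t, (w k : EReal) * (r k : EReal) = ((∑ k ∈ t, w k * r k : ℝ) : EReal) := by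
  classical
  induction t using Finset.induction_on with
  | empty => simp
  | insert a t ha ih => rw [Finset.sum_insert ha, Finset.sum_insert ha, ih]; push_cast; rfl

lemma coe_sum_mul_le {ι : Type*} (t : Finset ι) {w r : ι → ℝ} {X : ι → EReal} (hw : ∀ k, 0 ≤ w k)
    (h : ∀ k, (r k : EReal) ≤ X k) :
    ((∑ k ∈ t, w k * r k : ℝ) : EReal) ≤ ∑ k ∈ t, (w k : EReal) * X k := by
  rw [← coe_sum_mul]
  exact Finset.sum_le_sum fun k _ =>
    mul_le_mul_of_nonneg_left (h k) (EReal.coe_nonneg.2 (hw k))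

/-- The mixture `(1 - t) μ + t ν`, meaningful for `0 ≤ t ≤ 1`. -/
noncomputable def mix (t : ℝ) (μ ν : Measure (EuclideanSpace ℝ (Fin d))) :
    Measure (EuclideanSpace ℝ (Fin d)) :=
  ENNReal.ofReal (1 - t) • μ + ENNReal.ofReal t • ν

lemma integrable_mix {t : ℝ} {F : EuclideanSpace ℝ (Fin d) → ℝ} (h : Integrable F μ)
    (h' : Integrable F ν) : Integrable F (mix t μ ν) :=
  (h.smul_measure ENNReal.ofReal_ne_top).add_measure (h'.smul_measure ENNReal.ofReal_ne_top)

lemma integral_mix {t : ℝ} (h0 : 0 ≤ t) (h1 : t ≤ 1) {F : EuclideanSpace ℝ (Fin d) → ℝ}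
    (h : Integrable F μ) (h' : Integrable F ν) :
    ∫ x, F x ∂(mix t μ ν) = (1 - t) * ∫ x, F x ∂μ + t * ∫ x, F x ∂ν := by
  rw [mix, integral_add_measure (h.smul_measure ENNReal.ofReal_ne_top)
    (h'.smul_measure ENNReal.ofReal_ne_top), integral_smul_measure, integral_smul_measure,
    ENNReal.toReal_ofReal (by linarith), ENNReal.toReal_ofReal h0, smul_eq_mul, smul_eq_mul]

lemma isProbabilityMeasure_mix [IsProbabilityMeasure μ] [IsProbabilityMeasure ν] {t : ℝ}
    (h0 : 0 ≤ t) (h1 : t ≤ 1) : IsProbabilityMeasure (mix t μ ν) := by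
  constructor
  simp only [mix, Measure.coe_add, Measure.coe_smul, Pi.add_apply, Pi.smul_apply, measure_univ,
    smul_eq_mul, mul_one]
  rw [← ENNReal.ofReal_add (by linarith) h0]
  simp

lemma SG.mix {t : ℝ} (h0 : 0 ≤ t) (h1 : t ≤ 1) (h : SG q B μ) (h' : SG q B ν) :
    SG q B (mix t μ ν) := by
  refine ⟨integrable_mix h.int h'.int, ?_⟩
  rw [integral_mix h0 h1 h.int h'.int]
  nlinarith [h'.bound, h.bound]

/-- First-order optimality of a minimizer along the segment from `αstar` to `β`. Stability of the
optimal potentials replaces differentiability of the entropic cost. -/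
lemma first_order (hε : 0 < ε) (hq : 0 < q) {K : ℕ}
    {αs : Fin K → Measure (EuclideanSpace ℝ (Fin d))} [∀ k, IsProbabilityMeasure (αs k)]
    {w : Fin K → ℝ} (hw : ∀ k, 0 ≤ w k) (hwsum : ∑ k, w k = 1)
    {αstar β : Measure (EuclideanSpace ℝ (Fin d))} [IsProbabilityMeasure αstar]
    [IsProbabilityMeasure β] (hαs : ∀ k, SG q B (αs k)) (hstar : SG q B αstar) (hβ : SG q B β)
    (hmin : ∀ α : Measure (EuclideanSpace ℝ (Fin d)),
        IsProbabilityMeasure α → SubGaussian d α →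
        ∑ k, ((w k : ℝ) : EReal) * OTe d ε (αs k) αstar
          ≤ ∑ k, ((w k : ℝ) : EReal) * OTe d ε (αs k) α)
    {u v : Fin K → EuclideanSpace ℝ (Fin d) → ℝ} {C₀ : Fin K → ℝ}
    (hS : ∀ k, Sol (2 / ε) (C₀ k) (αs k) αstar (u k) (v k)) :
    ∫ x, ‖x‖ ^ 2 ∂αstar - ε * ∑ k, w k * ∫ y, LZ (2 / ε) (αs k) (u k) y ∂αstar
      ≤ ∫ x, ‖x‖ ^ 2 ∂β - ε * ∑ k, w k * ∫ y, LZ (2 / ε) (αs k) (u k) y ∂β := by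
  have hs : 0 ≤ 2 / ε := by positivity
  obtain ⟨C₁, hC₁⟩ := exists_sol (E := EuclideanSpace ℝ (Fin d)) hq hs (hstar.one_le hq)
  -- One growth constant for the given potentials and for those of all the mixtures.
  obtain ⟨C, hC0, hC1⟩ : ∃ C, (∀ k, C₀ k ≤ C) ∧ C₁ ≤ C := by
    refine ⟨|C₁| + ∑ k, |C₀ k|, fun k => ?_, ?_⟩
    · have := Finset.single_le_sum (f := fun k => |C₀ k|) (fun i _ => abs_nonneg _)
        (Finset.mem_univ k)
      linarith [le_abs_self (C₀ k), abs_nonneg C₁]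
    · have : 0 ≤ ∑ k, |C₀ k| := Finset.sum_nonneg fun i _ => abs_nonneg _
      linarith [le_abs_self C₁]
  replace hS := fun k => (hS k).mono (hC0 k)
  set Ms := ∫ x, ‖x‖ ^ 2 ∂αstar
  set Mb := ∫ x, ‖x‖ ^ 2 ∂β
  set A : Fin K → ℝ := fun k => ∫ y, LZ (2 / ε) (αs k) (u k) y ∂αstar
  set Φ : Fin K → ℝ := fun k => ∫ y, LZ (2 / ε) (αs k) (u k) y ∂β
  change Ms - ε * ∑ k, w k * A k ≤ Mb - ε * ∑ k, w k * Φ k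
  set D := bd (2 / ε) q B C * (1 + q * B)
  set T := Mb + ε * D - (Ms - ε * ∑ k, w k * A k) with hT
  refine le_of_forall_pos_le_add fun η' hη' => ?_
  obtain ⟨η, hη, rfl⟩ : ∃ η, 0 < η ∧ η' = ε * η := ⟨η' / ε, by positivity, by field_simp⟩
  choose δ hδ hδ' using fun k => (hS k).stability hq hs (hαs k) hstar hβ hη
  obtain ⟨t, ht0, ht2, htδ⟩ : ∃ t : ℝ, 0 < t ∧ t < 1 / 2 ∧
      ∀ k, 0 < w k → t * T < δ k * ε * w k / 2 := by
    have e1 : ∀ᶠ t : ℝ in 𝓝[>] 0, t < 1 / 2 :=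
      nhdsWithin_le_nhds (Iio_mem_nhds (by norm_num))
    have e2 : ∀ᶠ t : ℝ in 𝓝[>] 0, ∀ k, 0 < w k → t * T < δ k * ε * w k / 2 := by
      rw [eventually_all]
      intro k
      rcases (hw k).eq_or_lt with h0 | h0
      · simp [← h0]
      have hlim : Tendsto (fun t : ℝ => t * T) (𝓝[>] 0) (𝓝 (0 * T)) :=
        (tendsto_id.mul_const T).mono_left nhdsWithin_le_nhds
      have hpos : 0 * T < δ k * ε * w k / 2 := by
        have := hδ k
        rw [zero_mul]; positivity
      filter_upwards [hlim.eventually_lt_const hpos] with t ht _ using ht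
    obtain ⟨t, h1, h2, h3⟩ := (e1.and (e2.and self_mem_nhdsWithin)).exists
    exact ⟨t, h3, h1, h2⟩
  have := isProbabilityMeasure_mix (μ := αstar) (ν := β) ht0.le (by linarith : t ≤ 1)
  have hmix : SG q B (mix t αstar β) := hstar.mix ht0.le (by linarith) hβ
  choose U V hUV using fun k => hC₁ (αs k) (mix t αstar β) (hαs k) hmix
  replace hUV := fun k => (hUV k).mono hC1
  set P : Fin K → ℝ := fun k => ∫ y, LZ (2 / ε) (αs k) (U k) y ∂αstar
  set Q : Fin K → ℝ := fun k => ∫ y, LZ (2 / ε) (αs k) (U k) y ∂β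
  have hAP : ∀ k, A k ≤ P k := fun k =>
    ((hS k).minimal hq hs (hαs k) hstar (hUV k).cls).1
  have hQD : ∀ k, -D ≤ Q k := fun k =>
    neg_le_of_abs_le ((hUV k).cls.abs_integral_LZ_le hq hs (hαs k) hβ)
  have hm := hmin _ this (hmix.subGaussian hq)
  have o1 : ∀ k, OTe d ε (αs k) αstar = ((∫ x, ‖x‖ ^ 2 ∂(αs k) + (Ms - ε * A k) : ℝ) : EReal) := by
    intro k
    rw [(hS k).OTe hε hq (hαs k) hstar, add_sub_assoc]
  have o2 : ∀ k, OTe d ε (αs k) (mix t αstar β) = ((∫ x, ‖x‖ ^ 2 ∂(αs k)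
      + ((1 - t) * (Ms - ε * P k) + t * (Mb - ε * Q k)) : ℝ) : EReal) := by
    intro k
    rw [(hUV k).OTe hε hq (hαs k) hmix, integral_mix ht0.le (by linarith)
      (hstar.integrable_sq hq) (hβ.integrable_sq hq), integral_mix ht0.le (by linarith)
      ((hUV k).cls.integrable_LZ hq hs (hαs k) hstar)
      ((hUV k).cls.integrable_LZ hq hs (hαs k) hβ)]
    congr 1
    simp only [P, Q, Ms, Mb]
    ring
  simp only [o1, o2] at hm
  rw [coe_sum_mul, coe_sum_mul, EReal.coe_le_coe_iff] at hm
  -- The weights sum to one, so constants pass through the weighted average.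
  have expand : ∀ a b c : ℝ, ∀ F G : Fin K → ℝ,
      ∑ k, w k * (a * (Ms - ε * F k) + b * (c - ε * G k))
        = a * (Ms - ε * ∑ k, w k * F k) + b * (c - ε * ∑ k, w k * G k) := by
    intro a b c F G
    have : ∀ k, w k * (a * (Ms - ε * F k) + b * (c - ε * G k))
      = w k * (a * Ms + b * c) - a * ε * (w k * F k) - b * ε * (w k * G k) := fun k => by ring
    simp only [this]
    rw [Finset.sum_sub_distrib, Finset.sum_sub_distrib, ← Finset.sum_mul, ← Finset.mul_sum,
      ← Finset.mul_sum, hwsum]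
    ring
  have x1 := expand 1 0 0 A A
  have x2 := expand (1 - t) t Mb P Q
  simp only [mul_add, Finset.sum_add_distrib] at hm x1 x2
  simp only [one_mul, zero_mul, mul_zero, Finset.sum_const_zero, add_zero] at x1
  have main : (1 - t) * ε * ∑ k, w k * (P k - A k)
      ≤ t * ((Mb - ε * ∑ k, w k * Q k) - (Ms - ε * ∑ k, w k * A k)) := by
    simp only [mul_sub, Finset.sum_sub_distrib] at *
    nlinarith
  -- Both sides of `main` carry information: nonnegativity of the left side gives the variational
  -- inequality for the perturbed potentials `U k`, and the bound `t * T` on the right side makes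
  -- them near-minimizers for `αstar`, so that `U k` may be replaced by `u k` when tested on `β`.
  have hPA : ∀ k, 0 ≤ w k * (P k - A k) := fun k =>
    mul_nonneg (hw k) (sub_nonneg.2 (hAP k))
  have hsum : 0 ≤ ∑ k, w k * (P k - A k) := Finset.sum_nonneg fun k _ => hPA k
  have hbr : 0 ≤ (Mb - ε * ∑ k, w k * Q k) - (Ms - ε * ∑ k, w k * A k) := by
    have h0 : 0 ≤ (1 - t) * ε * ∑ k, w k * (P k - A k) :=
      mul_nonneg (mul_nonneg (by linarith) hε.le) hsum
    exact nonneg_of_mul_nonneg_right (h0.trans main) ht0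
  have hbT : (Mb - ε * ∑ k, w k * Q k) - (Ms - ε * ∑ k, w k * A k) ≤ T := by
    have : -D ≤ ∑ k, w k * Q k := by
      calc -D = ∑ k, w k * -D := by rw [← Finset.sum_mul, hwsum, one_mul]
        _ ≤ _ := Finset.sum_le_sum fun k _ => mul_le_mul_of_nonneg_left (hQD k) (hw k)
    have := mul_le_mul_of_nonneg_left this hε.le
    rw [hT]
    linarith
  have hΦQ : ∀ k, w k * (Φ k - η) ≤ w k * Q k := by
    intro k
    rcases (hw k).eq_or_lt with h0 | h0
    · simp [← h0]
    refine mul_le_mul_of_nonneg_left ?_ (hw k)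
    refine hδ' k (U k) (hUV k).cls ?_
    change P k ≤ A k + δ k
    have h1 : w k * (P k - A k) ≤ ∑ k, w k * (P k - A k) :=
      Finset.single_le_sum (f := fun k => w k * (P k - A k)) (fun i _ => hPA i)
        (Finset.mem_univ k)
    have h2 : 1 / 2 * ε * (w k * (P k - A k)) ≤ (1 - t) * ε * ∑ k, w k * (P k - A k) := by
      refine mul_le_mul ?_ h1 (hPA k) (mul_nonneg (by linarith) hε.le)
      exact mul_le_mul_of_nonneg_right (by linarith) hε.le
    have h3 := mul_le_mul_of_nonneg_left hbT ht0.le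
    have h4 := htδ k h0
    have h5 : ε * w k * (P k - A k) < ε * w k * δ k := by linarith
    have := lt_of_mul_lt_mul_left h5 (by positivity)
    linarith
  have hfin : ∑ k, w k * Φ k - η ≤ ∑ k, w k * Q k := by
    have := Finset.sum_le_sum (s := Finset.univ) fun k _ => hΦQ k
    simp only [mul_sub, Finset.sum_sub_distrib] at this
    rwa [← Finset.sum_mul, hwsum, one_mul] at this
  have := mul_le_mul_of_nonneg_left hfin hε.le
  linarith

end Barycenter

/-- a sub-Gaussian probability measure `α⋆` minimizes
`α ↦ Σ_k w_k OT_ε(α_k, α)` over sub-Gaussian probability measures iff there exist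
continuous potentials `f_k, g_k`, integrable against every sub-Gaussian probability
measure, satisfying the Sinkhorn fixed-point equations everywhere together with the
first-order optimality inequality `⟨Σ_k w_k g_k, β - α⋆⟩ ≥ 0` for every sub-Gaussian
probability measure `β`. -/
theorem ot_barycenter_characterization (d : ℕ) (ε : ℝ) (hε : 0 < ε)
    (K : ℕ) (hK : 1 ≤ K) (αs : Fin K → Measure (EuclideanSpace ℝ (Fin d)))
    (hαs : ∀ k, IsProbabilityMeasure (αs k) ∧ SubGaussian d (αs k))
    (w : Fin K → ℝ) (hw : ∀ k, 0 ≤ w k) (hwsum : ∑ k, w k = 1)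
    (αstar : Measure (EuclideanSpace ℝ (Fin d)))
    (hαstar : IsProbabilityMeasure αstar) (hαstarG : SubGaussian d αstar) :
    (∀ α : Measure (EuclideanSpace ℝ (Fin d)),
        IsProbabilityMeasure α → SubGaussian d α →
        ∑ k, ((w k : ℝ) : EReal) * OTe d ε (αs k) αstar
          ≤ ∑ k, ((w k : ℝ) : EReal) * OTe d ε (αs k) α)
      ↔
    ∃ f g : Fin K → EuclideanSpace ℝ (Fin d) → ℝ,
      (∀ k, Continuous (f k) ∧ Continuous (g k)) ∧
      (∀ k, ∀ μ : Measure (EuclideanSpace ℝ (Fin d)),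
        IsProbabilityMeasure μ → SubGaussian d μ →
        Integrable (f k) μ ∧ Integrable (g k) μ) ∧
      (∀ k, ∀ x, Real.exp (f k x / ε) *
        ∫ y, Real.exp ((g k y - ‖x - y‖ ^ 2) / ε) ∂αstar = 1) ∧
      (∀ k, ∀ y, Real.exp (g k y / ε) *
        ∫ x, Real.exp ((f k x - ‖x - y‖ ^ 2) / ε) ∂(αs k) = 1) ∧
      (∀ β : Measure (EuclideanSpace ℝ (Fin d)),
        IsProbabilityMeasure β → SubGaussian d β →
        (∫ x, ∑ k, w k * g k x ∂β) - ∫ x, ∑ k, w k * g k x ∂αstar ≥ 0) := by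
  have hP := fun k => (hαs k).1
  obtain ⟨q₀, B₀, hq₀, -, hSG⟩ := exists_common_SG (ι := Option (Fin K))
    (ρ := fun i => i.elim αstar αs) (by rintro (_ | k); exacts [⟨hαstar, hαstarG⟩, hαs k])
  have hstar₀ : SG q₀ B₀ αstar := hSG none
  have hα₀ : ∀ k, SG q₀ B₀ (αs k) := fun k => hSG (some k)
  constructor
  · intro hmin
    have hs : 0 ≤ 2 / ε := by positivity
    obtain ⟨C, hC⟩ := exists_sol (E := EuclideanSpace ℝ (Fin d)) hq₀ hs (hstar₀.one_le hq₀)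
    choose u v hS using fun k => hC (αs k) αstar (hα₀ k) hstar₀
    refine ⟨fun k => pot ε (u k), fun k => pot ε (v k),
      fun k => ⟨continuous_pot (hS k).cu, continuous_pot (hS k).cv⟩, ?_,
      fun k => (hS k).pot_eq_one_left hε hq₀ hstar₀,
      fun k => (hS k).pot_eq_one_right hε hq₀ (hα₀ k), ?_⟩
    · intro k μ hμ hμG
      obtain ⟨q, B, hq, h⟩ := hμG.exists_SG
      exact ⟨integrable_pot hq h (hS k).gru, integrable_pot hq h (hS k).grv⟩
    · intro β hβ hβG
      obtain ⟨q, B, hq, -, hSGβ⟩ := exists_common_SG (ι := Option (Option (Fin K)))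
        (ρ := fun i => i.elim β fun i => i.elim αstar αs)
        (by rintro (_ | _ | k); exacts [⟨hβ, hβG⟩, ⟨hαstar, hαstarG⟩, hαs k])
      have hβS : SG q B β := hSGβ none
      have hstarS : SG q B αstar := hSGβ (some none)
      have hαS : ∀ k, SG q B (αs k) := fun k => hSGβ (some (some k))
      have hfo := first_order hε hq hw hwsum hαS hstarS hβS hmin hS
      have key : ∀ ρ : Measure (EuclideanSpace ℝ (Fin d)), IsProbabilityMeasure ρ → SG q B ρ →
          ∫ x, ∑ k, w k * pot ε (v k) x ∂ρ
            = ∫ x, ‖x‖ ^ 2 ∂ρ - ε * ∑ k, w k * ∫ y, LZ (2 / ε) (αs k) (u k) y ∂ρ := by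
        intro ρ _ hρ
        rw [integral_finsetSum _ fun k _ => (integrable_pot hq hρ (hS k).grv).const_mul (w k)]
        have : ∀ k, ∫ x, w k * pot ε (v k) x ∂ρ = w k * ∫ x, ‖x‖ ^ 2 ∂ρ
            - ε * (w k * ∫ y, LZ (2 / ε) (αs k) (u k) y ∂ρ) := by
          intro k
          rw [integral_const_mul, integral_pot hq hρ (hS k).grv, (hS k).integral_v]
          ring
        simp only [this]
        rw [Finset.sum_sub_distrib, ← Finset.sum_mul, ← Finset.mul_sum, hwsum, one_mul]
      rw [key β hβ hβS, key αstar hαstar hstarS]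
      linarith
  · rintro ⟨f, g, hc, hi, h1, h2, hvar⟩ α hα hαG
    have e : ∀ k, OTe d ε (αs k) αstar = ((∫ x, f k x ∂(αs k) + ∫ y, g k y ∂αstar : ℝ) : EReal) :=
      fun k => OTe_eq hε ((hα₀ k).integrable_sq hq₀) (hstar₀.integrable_sq hq₀) (hc k).1 (hc k).2
        (hi k _ (hαs k).1 (hαs k).2).1 (hi k _ hαstar hαstarG).2 (h1 k) (h2 k)
    have l : ∀ k, ((∫ x, f k x ∂(αs k) + ∫ y, g k y ∂α : ℝ) : EReal) ≤ OTe d ε (αs k) α :=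
      fun k => le_OTe hε (hc k).1 (hc k).2 (hi k _ (hαs k).1 (hαs k).2).1 (hi k _ hα hαG).2 (h2 k)
    simp only [e]
    rw [coe_sum_mul]
    refine le_trans ?_ (coe_sum_mul_le Finset.univ hw l)
    have hv := hvar α hα hαG
    rw [integral_finsetSum _ fun k _ => (hi k _ hα hαG).2.const_mul (w k),
      integral_finsetSum _ fun k _ => (hi k _ hαstar hαstarG).2.const_mul (w k)] at hv
    simp only [integral_const_mul] at hv
    rw [EReal.coe_le_coe_iff]
    simp only [mul_add, Finset.sum_add_distrib]
    linarith
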